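/- arXiv:1205.2803 — 4 statements merged into one kernel-verified Lean document; each statement's English description precedes it below -/
import Mathlib

section
/- Let ħ > 0, let V : ℝ → ℝ be a Schwartz function, let x ∈ ℝ, and let f : ℝ → ℂ be a Schwartz function. Then the function v ↦ (Θ[V]f)(x,v) is integrable on ℝ and its zeroth moment vanishes: ∫_ℝ (Θ[V]f)(x,v) dv = 0. -/
open MeasureTheory Complex

/-- The one-dimensional nonlocal Wigner potential operator
`(Θ[V]f)(x,v) = (-i)/(2πℏ²) ∫ [V(x+y/2) - V(x-y/2)] e^{iyv/ℏ} (∫ f(w) e^{-iyw/ℏ} dw) dy`. -/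
noncomputable def wignerTheta (ℏ : ℝ) (V : ℝ → ℝ) (f : ℝ → ℂ) (x v : ℝ) : ℂ :=
  (-Complex.I) / (2 * Real.pi * ℏ ^ 2) *
    ∫ y : ℝ, ((V (x + y / 2) - V (x - y / 2) : ℝ) : ℂ) *
      Complex.exp (Complex.I * y * v / ℏ) *
      ∫ w : ℝ, f w * Complex.exp (-Complex.I * y * w / ℏ)

open scoped FourierTransform SchwartzMap in
lemma wigner_schwartz_fourierInv (h : SchwartzMap ℝ ℂ) (h0 : h 0 = 0) :
    Integrable (fun v : ℝ => ∫ t : ℝ, h t * Complex.exp (2 * Real.pi * Complex.I * t * v)) ∧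
    (∫ v : ℝ, ∫ t : ℝ, h t * Complex.exp (2 * Real.pi * Complex.I * t * v)) = 0 := by
  have e : (fun v : ℝ => ∫ t : ℝ, h t * Complex.exp (2 * Real.pi * Complex.I * t * v))
      = ⇑(𝓕⁻ h : SchwartzMap ℝ ℂ) := by
    funext v
    rw [SchwartzMap.fourierInv_coe, Real.fourierInv_eq']
    congr 1; funext t
    rw [smul_eq_mul, mul_comm]
    congr 2
    simp
    ring
  rw [e]
  refine ⟨(𝓕⁻ h : SchwartzMap ℝ ℂ).integrable, ?_⟩
  have : (𝓕 (𝓕⁻ h : SchwartzMap ℝ ℂ) : SchwartzMap ℝ ℂ) 0 = h 0 := by rw [FourierTransform.fourier_fourierInv_eq]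
  rw [SchwartzMap.fourier_coe, Real.fourier_eq', h0] at this
  simpa using this

open scoped FourierTransform SchwartzMap in
lemma wigner_growth (V : SchwartzMap ℝ ℝ) (x a : ℝ) :
    (fun t : ℝ => ((V (x + a * t) - V (x - a * t) : ℝ) : ℂ)).HasTemperateGrowth := by
  have hV : (⇑V).HasTemperateGrowth := V.hasTemperateGrowth
  have h1 : (fun t : ℝ => V (x + a * t)).HasTemperateGrowth :=
    hV.comp (g := ⇑V) (f := fun t : ℝ => x + a * t) (by fun_prop)
  have h2 : (fun t : ℝ => V (x - a * t)).HasTemperateGrowth :=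
    hV.comp (g := ⇑V) (f := fun t : ℝ => x - a * t) (by fun_prop)
  have h3 := h1.sub h2
  exact (Complex.ofRealCLM.hasTemperateGrowth).comp h3

open scoped FourierTransform SchwartzMap in
theorem wignerTheta_zeroth_moment (ℏ : ℝ) (hℏ : 0 < ℏ) (V : SchwartzMap ℝ ℝ) (x : ℝ)
    (f : SchwartzMap ℝ ℂ) :
    Integrable (fun v : ℝ => wignerTheta ℏ (⇑V) (⇑f) x v) ∧
    (∫ v : ℝ, wignerTheta ℏ (⇑V) (⇑f) x v) = 0 := by
  have hg := wigner_growth V x (Real.pi * ℏ)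
  set h : SchwartzMap ℝ ℂ := SchwartzMap.smulLeftCLM ℂ (fun t : ℝ =>
    ((V (x + (Real.pi * ℏ) * t) - V (x - (Real.pi * ℏ) * t) : ℝ) : ℂ)) (𝓕 f : SchwartzMap ℝ ℂ)
    with hh
  have hap : ∀ t, h t = ((V (x + (Real.pi * ℏ) * t) - V (x - (Real.pi * ℏ) * t) : ℝ) : ℂ)
      * (𝓕 f : SchwartzMap ℝ ℂ) t := fun t => by
    rw [hh, SchwartzMap.smulLeftCLM_apply_apply hg, smul_eq_mul]
  obtain ⟨hi, hz⟩ := wigner_schwartz_fourierInv h (by rw [hap]; simp)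
  have hc : (ℏ : ℂ) ≠ 0 := by exact_mod_cast hℏ.ne'
  have hp : (0 : ℝ) < 2 * Real.pi * ℏ := by positivity
  have e : (fun v : ℝ => wignerTheta ℏ (⇑V) (⇑f) x v) = fun v : ℝ =>
      ((-Complex.I) / (2 * Real.pi * ℏ ^ 2) * ((2 * Real.pi * ℏ : ℝ) : ℂ)) *
        ∫ t : ℝ, h t * Complex.exp (2 * Real.pi * Complex.I * t * v) := by
    funext v
    rw [wignerTheta, mul_assoc (-Complex.I / (2 * Real.pi * ℏ ^ 2))]
    congr 1
    have key := Measure.integral_comp_mul_left (fun y : ℝ =>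
      ((V (x + y / 2) - V (x - y / 2) : ℝ) : ℂ) *
      Complex.exp (Complex.I * y * v / ℏ) *
      ∫ w : ℝ, f w * Complex.exp (-Complex.I * y * w / ℏ)) (2 * Real.pi * ℏ)
    have key2 : (∫ t : ℝ, h t * Complex.exp (2 * Real.pi * Complex.I * t * v)) = _ :=
      Eq.trans ?_ key
    · rw [key2, abs_of_pos (inv_pos.mpr hp), Complex.real_smul, ← mul_assoc,
        ← Complex.ofReal_mul, mul_inv_cancel₀ hp.ne', Complex.ofReal_one, one_mul]
    · congr 1; funext t
      have ef : (𝓕 f : SchwartzMap ℝ ℂ) t = ∫ w : ℝ, f w *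
          Complex.exp (-Complex.I * ((2 * Real.pi * ℏ * t : ℝ) : ℂ) * w / ℏ) := by
        rw [SchwartzMap.fourier_coe, Real.fourier_eq']
        congr 1; funext w
        rw [smul_eq_mul, mul_comm]
        congr 2
        simp
        field_simp
      have e1 : 2 * Real.pi * ℏ * t / 2 = Real.pi * ℏ * t := by ring
      have e2 : Complex.I * ((2 * Real.pi * ℏ * t : ℝ) : ℂ) * v / ℏ
          = 2 * Real.pi * Complex.I * t * v := by
        push_cast; field_simp
      rw [hap, ef, e1, e2]
      ring
  rw [e]
  refine ⟨hi.const_mul _, ?_⟩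
  rw [integral_const_mul, hz, mul_zero]
end

section
/- Let ħ > 0, let V : ℝ → ℝ be a Schwartz function, let x ∈ ℝ, and let f : ℝ → ℂ be a Schwartz function. Then the first moment of the nonlocal Wigner potential term satisfies ∫_ℝ v (Θ[V]f)(x,v) dv = V'(x) ∫_ℝ f(v) dv. -/
open MeasureTheory Complex

open scoped FourierTransform LineDeriv SchwartzMap

/-- Affine precomposition of a real Schwartz function, viewed as complex-valued. -/
lemma exists_affine_schwartz (V : SchwartzMap ℝ ℝ) (x a : ℝ) (ha : a ≠ 0) :
    ∃ W : SchwartzMap ℝ ℂ, ∀ s, W s = ((V (x + a * s) : ℝ) : ℂ) := by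
  refine ⟨SchwartzMap.postcompCLM Complex.ofRealCLM
    (SchwartzMap.compCLMOfContinuousLinearEquiv ℝ
      (ContinuousLinearEquiv.unitsEquivAut ℝ (Units.mk0 a ha))
      (SchwartzMap.compSubConstCLM ℝ (-x) V)), fun s => ?_⟩
  simp [add_comm, mul_comm]

/-- First moment of an inverse Fourier transform. -/
lemma first_moment_fourierInv (H : SchwartzMap ℝ ℂ) :
    (-(2 * Real.pi * Complex.I)) * ∫ v : ℝ, (v : ℂ) * (𝓕⁻ H) v = deriv H 0 := by
  have htg : (fun y : ℝ => inner ℝ y (1 : ℝ)).HasTemperateGrowth := by fun_prop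
  have h1 : ∀ v : ℝ, (𝓕⁻ (∂_{(1 : ℝ)} H)) v
      = (-(2 * Real.pi * Complex.I)) * ((v : ℂ) * (𝓕⁻ H) v) := by
    intro v
    rw [SchwartzMap.fourierInv_lineDerivOp_eq]
    rw [SchwartzMap.smul_apply, SchwartzMap.smulLeftCLM_apply_apply htg]
    simp
  rw [← integral_const_mul]
  simp_rw [← h1]
  have h2 : (𝓕 (𝓕⁻ (∂_{(1 : ℝ)} H))) 0 = (∂_{(1 : ℝ)} H) 0 := by
    rw [FourierTransform.fourier_fourierInv_eq]
  rw [SchwartzMap.fourier_coe, Real.fourier_real_eq_integral_exp_smul] at h2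
  rw [SchwartzMap.lineDerivOp_apply_eq_fderiv] at h2
  simpa using h2

/-- For a Schwartz potential `V` and a Schwartz function `f`, the first moment of the
nonlocal Wigner potential term satisfies `∫ v (Θ[V]f)(x,v) dv = V'(x) ∫ f(v) dv`. -/
theorem wignerTheta_first_moment (ℏ : ℝ) (hℏ : 0 < ℏ) (V : SchwartzMap ℝ ℝ) (x : ℝ)
    (f : SchwartzMap ℝ ℂ) :
    (∫ v : ℝ, (v : ℂ) * wignerTheta ℏ (⇑V) (⇑f) x v) =
      ((deriv (⇑V) x : ℝ) : ℂ) * ∫ v : ℝ, f v := by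
  have hpi := Real.pi_pos
  have hpc : (Real.pi : ℂ) ≠ 0 := by exact_mod_cast hpi.ne'
  have hhc : (ℏ : ℂ) ≠ 0 := by exact_mod_cast hℏ.ne'
  have ha : Real.pi * ℏ ≠ 0 := by positivity
  obtain ⟨Wp, hWp⟩ := exists_affine_schwartz V x (Real.pi * ℏ) ha
  obtain ⟨Wm, hWm⟩ := exists_affine_schwartz V x (-(Real.pi * ℏ)) (neg_ne_zero.mpr ha)
  let H : SchwartzMap ℝ ℂ :=
    SchwartzMap.pairing (ContinuousLinearMap.mul ℂ ℂ) (Wp - Wm) (𝓕 f)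
  have hH : ∀ s, H s = (Wp s - Wm s) * (𝓕 f) s := fun s => rfl
  have hF : ∀ s : ℝ, (∫ w : ℝ, f w * Complex.exp (-Complex.I * ((2 * Real.pi * ℏ * s : ℝ) : ℂ) * w / ℏ))
      = (𝓕 f) s := by
    intro s
    rw [SchwartzMap.fourier_coe, Real.fourier_real_eq_integral_exp_smul]
    congr 1 with w
    rw [smul_eq_mul, mul_comm]
    congr 2
    push_cast
    field_simp
  have hΘ : ∀ v, wignerTheta ℏ V f x v = (-Complex.I / ℏ) * (𝓕⁻ H) v := by
    intro v
    have hsub := Measure.integral_comp_mul_left (fun y : ℝ =>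
      ((V (x + y / 2) - V (x - y / 2) : ℝ) : ℂ) *
      Complex.exp (Complex.I * y * v / ℏ) *
      ∫ w : ℝ, f w * Complex.exp (-Complex.I * y * w / ℏ)) (2 * Real.pi * ℏ)
    have hL : (𝓕⁻ H) v = ∫ s : ℝ, (fun y : ℝ =>
      ((V (x + y / 2) - V (x - y / 2) : ℝ) : ℂ) *
      Complex.exp (Complex.I * y * v / ℏ) *
      ∫ w : ℝ, f w * Complex.exp (-Complex.I * y * w / ℏ)) (2 * Real.pi * ℏ * s) := by
      rw [SchwartzMap.fourierInv_coe, Real.fourierInv_eq']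
      congr 1 with s
      beta_reduce
      rw [hF, hH, hWp, hWm, smul_eq_mul]
      have e1 : x + 2 * Real.pi * ℏ * s / 2 = x + Real.pi * ℏ * s := by ring
      have e2 : x - 2 * Real.pi * ℏ * s / 2 = x + -(Real.pi * ℏ) * s := by ring
      have e3 : Complex.I * ((2 * Real.pi * ℏ * s : ℝ) : ℂ) * v / ℏ
          = ((2 * Real.pi * inner ℝ s v : ℝ) : ℂ) * Complex.I := by
        simp
        field_simp
      rw [e1, e2, e3]
      push_cast
      ring
    rw [hL, hsub, abs_of_pos (by positivity)]
    unfold wignerTheta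
    rw [Complex.real_smul]
    push_cast
    rw [← mul_assoc]
    congr 1
    field_simp
  have hmom := first_moment_fourierInv H
  have hder : deriv H 0 = 2 * Real.pi * ℏ * (deriv V x : ℝ) * ∫ v : ℝ, f v := by
    have hd : ∀ (W : SchwartzMap ℝ ℂ) (a : ℝ), (∀ s, W s = ((V (x + a * s) : ℝ) : ℂ)) →
        HasDerivAt W ((deriv V x * a : ℝ) : ℂ) 0 := by
      intro W a hW
      have hV : HasDerivAt V (deriv V x) (x + a * 0) := by
        simpa using V.hasDerivAt x
      have hi : HasDerivAt (fun s : ℝ => x + a * s) a 0 := by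
        simpa using ((hasDerivAt_id (0 : ℝ)).const_mul a).const_add x
      have := (hV.comp (0 : ℝ) hi).ofReal_comp
      rw [show (W : ℝ → ℂ) = fun s => ((V (x + a * s) : ℝ) : ℂ) from funext hW]
      exact this
    have hp := (((hd Wp _ hWp).sub (hd Wm _ hWm)).mul ((𝓕 f).hasDerivAt 0)).deriv
    have hF0 : (𝓕 f) 0 = ∫ v : ℝ, f v := by
      rw [← hF]; simp
    have h0 : Wp 0 = Wm 0 := by simp [hWp, hWm]
    change deriv (fun s => (Wp s - Wm s) * (𝓕 f) s) 0 = _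
    refine hp.trans ?_
    simp only [Pi.sub_apply, h0, hF0]
    push_cast
    ring
  simp_rw [hΘ]
  have hI : (∫ v : ℝ, (v : ℂ) * ((-Complex.I / ℏ) * (𝓕⁻ H) v))
      = (-Complex.I / ℏ) * ∫ v : ℝ, (v : ℂ) * (𝓕⁻ H) v := by
    rw [← integral_const_mul]
    congr 1 with v
    ring
  rw [hI]
  rw [hder] at hmom
  have hne : (2 * Real.pi * ℏ : ℂ) ≠ 0 := by simp [hpc, hhc]
  apply mul_left_cancel₀ hne
  rw [← mul_assoc (2 * Real.pi * ℏ : ℂ) _ (∫ v : ℝ, f v), ← hmom]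
  field_simp
end

section
/- Let ħ > 0, let V : ℝ → ℝ be a Schwartz function, let x ∈ ℝ, and let f : ℝ → ℂ be a Schwartz function. Then the second moment of the nonlocal Wigner potential term satisfies ∫_ℝ v^2 (Θ[V]f)(x,v) dv = 2 V'(x) ∫_ℝ v f(v) dv. -/
open MeasureTheory Complex

open scoped FourierTransform in
theorem wt_integrable_pow (f : SchwartzMap ℝ ℂ) (n : ℕ) :
    Integrable (fun x : ℝ => x ^ n • f x) := by
  have h := f.integrable_pow_mul volume n
  refine h.mono (by fun_prop) (Filter.Eventually.of_forall fun t => ?_)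
  simp [norm_smul]

open scoped FourierTransform in
theorem wt_moment (f : SchwartzMap ℝ ℂ) (n : ℕ) :
    iteratedDeriv n (𝓕 (f : ℝ → ℂ)) 0 =
      (-2 * Real.pi * I) ^ n * ∫ v : ℝ, (v : ℂ) ^ n * f v := by
  rw [Real.iteratedDeriv_fourier (N := ⊤) (fun m _ => wt_integrable_pow f m) le_top,
    Real.fourier_real_eq_integral_exp_smul, ← integral_const_mul]
  congr 1
  ext v
  simp [mul_pow]
  ring

/-- The rescaled potential difference. -/
noncomputable def wtD (ℏ : ℝ) (V : ℝ → ℝ) (x t : ℝ) : ℂ :=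
  ((V (x + Real.pi * ℏ * t) - V (x - Real.pi * ℏ * t) : ℝ) : ℂ)

theorem wtD_temperate (ℏ : ℝ) (V : SchwartzMap ℝ ℝ) (x : ℝ) :
    (wtD ℏ V x).HasTemperateGrowth := by
  have hV := V.hasTemperateGrowth
  have hc : (fun t : ℝ => Real.pi * ℏ * t).HasTemperateGrowth := by fun_prop
  have h1 : (fun t : ℝ => x + Real.pi * ℏ * t).HasTemperateGrowth := by fun_prop
  have h2 : (fun t : ℝ => x - Real.pi * ℏ * t).HasTemperateGrowth := by fun_prop
  exact Function.HasTemperateGrowth.comp (g := Complex.ofReal) (by fun_prop)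
    ((hV.comp h1).sub (hV.comp h2))

theorem wtD_deriv (ℏ : ℝ) (V : SchwartzMap ℝ ℝ) (x : ℝ) :
    iteratedDeriv 1 (wtD ℏ V x) 0 = 2 * Real.pi * ℏ * ((deriv V x : ℝ) : ℂ) := by
  rw [iteratedDeriv_one]
  have hV : HasDerivAt V (deriv V x) x := V.differentiableAt.hasDerivAt
  have h0 : HasDerivAt (fun t : ℝ => Real.pi * ℏ * t) (Real.pi * ℏ) 0 := by
    simpa using (hasDerivAt_id (0 : ℝ)).const_mul (Real.pi * ℏ)
  have h1 : HasDerivAt (fun t : ℝ => V (x + Real.pi * ℏ * t)) (deriv V x * (Real.pi * ℏ)) 0 :=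
    HasDerivAt.comp (0 : ℝ) (by simpa using hV) (h0.const_add x)
  have h2 : HasDerivAt (fun t : ℝ => V (x - Real.pi * ℏ * t)) (deriv V x * (-(Real.pi * ℏ))) 0 :=
    HasDerivAt.comp (0 : ℝ) (by simpa using hV) (h0.const_sub x)
  have h3 := (h1.sub h2).ofReal_comp
  have h4 : HasDerivAt (wtD ℏ V x) _ 0 := h3
  rw [h4.deriv]
  push_cast
  ring

theorem wtD_deriv2 (ℏ : ℝ) (V : ℝ → ℝ) (x : ℝ) :
    iteratedDeriv 2 (wtD ℏ V x) 0 = 0 := by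
  have h := iteratedDeriv_comp_neg 2 (wtD ℏ V x) 0
  have e : (fun t => wtD ℏ V x (-t)) = -wtD ℏ V x := by
    ext t
    simp only [wtD, Pi.neg_apply]
    rw [mul_neg, sub_neg_eq_add, ← sub_eq_add_neg]
    push_cast
    ring
  rw [e, iteratedDeriv_neg] at h
  simp only [neg_zero, even_two, Even.neg_pow, one_pow, one_smul] at h
  exact self_eq_neg.mp h.symm

open scoped FourierTransform in
/-- The Schwartz function whose inverse Fourier transform is (up to scaling) `Θ[V]f`. -/
noncomputable def wtG (ℏ : ℝ) (V : SchwartzMap ℝ ℝ) (x : ℝ) (f : SchwartzMap ℝ ℂ) :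
    SchwartzMap ℝ ℂ := SchwartzMap.smulLeftCLM ℂ (wtD ℏ V x) (𝓕 f)

open scoped FourierTransform in
theorem wtG_coe (ℏ : ℝ) (V : SchwartzMap ℝ ℝ) (x : ℝ) (f : SchwartzMap ℝ ℂ) :
    (wtG ℏ V x f : ℝ → ℂ) = wtD ℏ V x * 𝓕 (f : ℝ → ℂ) := by
  ext t
  rw [wtG, SchwartzMap.smulLeftCLM_apply_apply (wtD_temperate ℏ V x), SchwartzMap.fourier_coe]
  rfl

open scoped FourierTransform in
theorem wtG_deriv2 (ℏ : ℝ) (V : SchwartzMap ℝ ℝ) (x : ℝ) (f : SchwartzMap ℝ ℂ) :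
    iteratedDeriv 2 (wtG ℏ V x f : ℝ → ℂ) 0 =
      2 * (2 * Real.pi * ℏ * ((deriv V x : ℝ) : ℂ)) *
        ((-2 * Real.pi * I) * ∫ v : ℝ, (v : ℂ) * f v) := by
  have hD : ContDiffAt ℝ (2 : ℕ) (wtD ℏ V x) 0 :=
    (contDiff_infty.mp (wtD_temperate ℏ V x).1 2).contDiffAt
  have hF : ContDiffAt ℝ (2 : ℕ) (𝓕 (f : ℝ → ℂ)) 0 := by
    rw [← SchwartzMap.fourier_coe]
    exact ((𝓕 f).smooth 2).contDiffAt
  have hm := wt_moment f 1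
  simp only [pow_one] at hm
  have hz : wtD ℏ V x 0 = 0 := by simp [wtD]
  rw [wtG_coe, iteratedDeriv_mul hD hF]
  simp only [Finset.sum_range_succ, Finset.sum_range_zero, iteratedDeriv_zero, hz, wtD_deriv,
    wtD_deriv2, hm, Nat.choose_one_right, show 2 - 1 = 1 from rfl]
  push_cast
  ring

open scoped FourierTransform in
theorem wt_theta_eq (ℏ : ℝ) (hℏ : 0 < ℏ) (V : SchwartzMap ℝ ℝ) (x : ℝ)
    (f : SchwartzMap ℝ ℂ) (v : ℝ) :
    wignerTheta ℏ V f x v = (-I / ℏ) * (𝓕⁻ (wtG ℏ V x f)) v := by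
  have hc : (0 : ℝ) < 2 * Real.pi * ℏ := by positivity
  have hℏ' : (ℏ : ℂ) ≠ 0 := by exact_mod_cast hℏ.ne'
  have hpi : (Real.pi : ℂ) ≠ 0 := by exact_mod_cast Real.pi_ne_zero
  rw [SchwartzMap.fourierInv_coe, Real.fourierInv_eq', wtG_coe, wignerTheta]
  have key := Measure.integral_comp_mul_left (fun y : ℝ =>
      ((V (x + y / 2) - V (x - y / 2) : ℝ) : ℂ) *
      Complex.exp (Complex.I * y * v / ℏ) *
      ∫ w : ℝ, f w * Complex.exp (-Complex.I * y * w / ℏ)) (2 * Real.pi * ℏ)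
  have e : (∫ t : ℝ, Complex.exp (((2 * Real.pi * inner ℝ t v : ℝ) : ℂ) * I) •
      (wtD ℏ V x * 𝓕 (f : ℝ → ℂ)) t) = ((2 * Real.pi * ℏ)⁻¹ : ℝ) • ∫ y : ℝ, 
      ((V (x + y / 2) - V (x - y / 2) : ℝ) : ℂ) *
      Complex.exp (Complex.I * y * v / ℏ) *
      ∫ w : ℝ, f w * Complex.exp (-Complex.I * y * w / ℏ) := by
    rw [← abs_of_pos (inv_pos.mpr hc), ← key]
    congr 1
    ext t
    have e1 : 𝓕 (f : ℝ → ℂ) t =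
        ∫ w : ℝ, f w * Complex.exp (-Complex.I * (2 * Real.pi * ℏ * t : ℝ) * w / ℏ) := by
      rw [Real.fourier_real_eq_integral_exp_smul]
      congr 1
      ext w
      rw [smul_eq_mul, mul_comm]
      congr 2
      push_cast
      field_simp
    have e2 : Complex.exp (((2 * Real.pi * inner ℝ t v : ℝ) : ℂ) * I) =
        Complex.exp (Complex.I * (2 * Real.pi * ℏ * t : ℝ) * v / ℏ) := by
      congr 1
      simp only [RCLike.inner_apply, conj_trivial]
      push_cast
      field_simp
    have e3 : wtD ℏ V x t = ((V (x + (2 * Real.pi * ℏ * t) / 2) -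
        V (x - (2 * Real.pi * ℏ * t) / 2) : ℝ) : ℂ) := by
      rw [wtD, show (2 * Real.pi * ℏ * t) / 2 = Real.pi * ℏ * t by ring]
    rw [Pi.mul_apply, e1, e2, e3, smul_eq_mul]
    ring
  rw [e, Complex.real_smul]
  generalize (∫ y : ℝ, ((V (x + y / 2) - V (x - y / 2) : ℝ) : ℂ) *
      Complex.exp (Complex.I * y * v / ℏ) *
      ∫ w : ℝ, f w * Complex.exp (-Complex.I * y * w / ℏ)) = K
  push_cast
  field_simp

/-- For a Schwartz potential `V` and a Schwartz function `f`, the second moment of the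
nonlocal Wigner potential term satisfies `∫ v² (Θ[V]f)(x,v) dv = 2 V'(x) ∫ v f(v) dv`. -/
theorem wignerTheta_second_moment (ℏ : ℝ) (hℏ : 0 < ℏ) (V : SchwartzMap ℝ ℝ) (x : ℝ)
    (f : SchwartzMap ℝ ℂ) :
    (∫ v : ℝ, (v : ℂ) ^ 2 * wignerTheta ℏ (⇑V) (⇑f) x v) =
      2 * ((deriv (⇑V) x : ℝ) : ℂ) * ∫ v : ℝ, (v : ℂ) * f v := by
  have hℏ' : (ℏ : ℂ) ≠ 0 := by exact_mod_cast hℏ.ne'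
  have hpi : (Real.pi : ℂ) ≠ 0 := by exact_mod_cast Real.pi_ne_zero
  have hm := wt_moment (FourierTransformInv.fourierInv (wtG ℏ V x f)) 2
  rw [← SchwartzMap.fourier_coe, FourierTransform.fourier_fourierInv_eq, wtG_deriv2] at hm
  simp only [wt_theta_eq ℏ hℏ V x f]
  have h2 : ∀ v : ℝ, (v : ℂ) ^ 2 * ((-I / ℏ) * (FourierTransformInv.fourierInv (wtG ℏ V x f)) v) =
      (-I / ℏ) * ((v : ℂ) ^ 2 * (FourierTransformInv.fourierInv (wtG ℏ V x f)) v) :=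
    fun v => by ring
  simp only [h2]
  rw [integral_const_mul]
  generalize (∫ v : ℝ, (v : ℂ) ^ 2 * (FourierTransformInv.fourierInv (wtG ℏ V x f)) v) = J at *
  generalize (∫ v : ℝ, (v : ℂ) * f v) = M at *
  have hI : I ^ 2 = -1 := I_sq
  have hJ : J = 2 * I * ℏ * ((deriv V x : ℝ) : ℂ) * M := by
    have h4 : (4 * (Real.pi : ℂ) ^ 2) ≠ 0 := mul_ne_zero (by norm_num) (pow_ne_zero 2 hpi)
    apply mul_left_cancel₀ h4
    linear_combination hm + 4 * (Real.pi : ℂ) ^ 2 * J * hI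
  rw [hJ]
  field_simp
  linear_combination -((deriv V x : ℝ) : ℂ) * M * hI
end

section
/- Momentum balance for the 1D Wigner–BGK equation: let ħ > 0, τ > 0, let V : ℝ → ℝ be a Schwartz function, and let t ↦ f(t) be a continuously differentiable curve in the Schwartz space S(ℝ^2) of real-valued functions of (x,v), such that for all t, x, v: ∂f/∂t + v ∂f/∂x + (Θ[V] f(t,x,·))(v) = (f_eq - f)/τ, where ρ(t,x) = ∫_ℝ f(t,x,v) dv > 0, ρ u = ∫_ℝ v f dv, ρ T = ∫_ℝ (v-u)^2 f dv with T(t,x) > 0, and f_eq(t,x,v) = ρ (2π T)^{-1/2} exp(-(v-u)^2/(2T)). Then d/dt ∫_ℝ ∫_ℝ v f(t,x,v) dx dv = - ∫_ℝ ρ(t,x) V'(x) dx. -/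
open MeasureTheory Complex

namespace WB
open Set Filter Topology

theorem ftc_closed_le {B : Set ℝ} {a b : ℝ} {g h : ℝ → ℝ} (hab : a ≤ b) (hB : IsClosed B)
    (haB : a ∈ B) (hbB : b ∈ B)
    (hsub : B ⊆ Icc a b)
    (hIntg : IntegrableOn h (Icc a b))
    (hgap : ∀ c ∈ B, ∀ d ∈ B, c < d → Ioo c d ∩ B = ∅ → g d - g c ≤ ∫ r in c..d, h r)
    (hder : ∀ c ∈ B, HasDerivWithinAt g (h c) B c) :
    g b - g a ≤ ∫ r in a..b, h r := by
  refine le_of_forall_pos_le_add fun ε εpos => ?_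
  rcases exists_lt_lowerSemicontinuous_integral_lt h hIntg εpos with
    ⟨G', f_lt_G', G'cont, G'int, G'lt_top, hG'⟩
  have G'int : IntegrableOn (fun x => (G' x).toReal) (Icc a b) := G'int
  have hcontB : ContinuousOn g B := fun c hc => (hder c hc).continuousWithinAt
  set s := {t | g t - g a ≤ ∫ u in a..t, (G' u).toReal} ∩ B with hs
  have s_closed : IsClosed s := by
    have : ContinuousOn (fun t => (g t - g a, ∫ u in a..t, (G' u).toReal)) B := by
      refine (hcontB.sub continuousOn_const).prodMk ?_
      have := intervalIntegral.continuousOn_primitive_interval (μ := volume) (a := a) (b := b)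
        (f := fun u => (G' u).toReal) (by rwa [uIcc_of_le hab])
      rw [uIcc_of_le hab] at this
      exact this.mono hsub
    simp only [s, inter_comm]
    exact this.preimage_isClosed_of_isClosed hB OrderClosedTopology.isClosed_le'
  have hGii : ∀ x ∈ Icc a b, ∀ y ∈ Icc a b, IntervalIntegrable (fun u => (G' u).toReal) volume x y := by
    intro x hx y hy
    rw [intervalIntegrable_iff]
    refine G'int.mono_set (uIoc_subset_uIcc.trans ?_)
    exact uIcc_subset_Icc hx hy
  have has : a ∈ s := ⟨by simp, haB⟩
  have hbdd : BddAbove s := ⟨b, fun x hx => (hsub hx.2).2⟩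
  have hmem : sSup s ∈ s := s_closed.csSup_mem ⟨a, has⟩ hbdd
  set t := sSup s with ht
  have htb : t = b := by
    by_contra hne
    have htab := hsub hmem.2
    have tlt : t < b := lt_of_le_of_ne htab.2 hne
    have key : ∃ u ∈ B, t < u ∧ g u - g t ≤ ∫ w in t..u, (G' w).toReal := by
      by_cases hacc : ∃ᶠ u in 𝓝[>] t, u ∈ B
      · obtain ⟨y, g'_lt_y', y_lt_G'⟩ : ∃ y : ℝ, (h t : EReal) < y ∧ (y : EReal) < G' t :=
          EReal.lt_iff_exists_real_btwn.1 (f_lt_G' t)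
        have I1 : ∀ᶠ u in 𝓝[>] t, (u - t) * y ≤ ∫ w in t..u, (G' w).toReal := by
          have B : ∀ᶠ u in 𝓝 t, (y : EReal) < G' u := G'cont.lowerSemicontinuousAt _ _ y_lt_G'
          rcases mem_nhds_iff_exists_Ioo_subset.1 B with ⟨m, M, ⟨hm, hM⟩, H⟩
          have : Ioo t (min M b) ∈ 𝓝[>] t := Ioo_mem_nhdsGT (lt_min hM tlt)
          filter_upwards [this] with u hu
          have I : Icc t u ⊆ Icc a b := Icc_subset_Icc htab.1 (hu.2.le.trans (min_le_right _ _))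
          calc
            (u - t) * y = ∫ _ in Icc t u, y := by
              simp only [MeasureTheory.integral_const, MeasurableSet.univ, measureReal_restrict_apply,
                univ_inter, hu.left.le, Real.volume_real_Icc_of_le, smul_eq_mul]
            _ ≤ ∫ w in t..u, (G' w).toReal := by
              rw [intervalIntegral.integral_of_le hu.1.le, ← integral_Icc_eq_integral_Ioc]
              apply setIntegral_mono_ae_restrict
              · simp
              · exact IntegrableOn.mono_set G'int I
              · have C1 : ∀ᵐ x : ℝ ∂volume.restrict (Icc t u), G' x < ⊤ :=
                  ae_mono (Measure.restrict_mono I le_rfl) G'lt_top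
                have C2 : ∀ᵐ x : ℝ ∂volume.restrict (Icc t u), x ∈ Icc t u :=
                  ae_restrict_mem measurableSet_Icc
                filter_upwards [C1, C2] with x G'x hx
                apply EReal.coe_le_coe_iff.1
                have : x ∈ Ioo m M := by
                  simp only [hm.trans_le hx.left,
                    (hx.right.trans_lt hu.right).trans_le (min_le_left M b), mem_Ioo, and_self_iff]
                refine (H this).out.le.trans_eq ?_
                exact (EReal.coe_toReal G'x.ne (f_lt_G' x).ne_bot).symm
        have I2 : ∀ᶠ u in 𝓝[>] t, u ∈ B → g u - g t ≤ (u - t) * y := by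
          have g'_lt_y : h t < y := EReal.coe_lt_coe_iff.1 g'_lt_y'
          have hd : HasDerivWithinAt g (h t) (B ∩ Ioi t) t := (hder t hmem.2).mono inter_subset_left
          have := hd.limsup_slope_le' (fun hh => lt_irrefl t (mem_Ioi.1 hh.2)) g'_lt_y
          rw [inter_comm, nhdsWithin_inter', eventually_inf_principal] at this
          filter_upwards [this, self_mem_nhdsWithin] with u hu t_lt_u huB
          have := mul_le_mul_of_nonneg_left (hu huB).le (sub_pos.2 t_lt_u.out).le
          rwa [← smul_eq_mul, sub_smul_slope] at this
        obtain ⟨u, ⟨⟨huB, h1⟩, h2⟩, h3⟩ := (((hacc.and_eventually I1).and_eventually I2).and_eventually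
          self_mem_nhdsWithin).exists
        exact ⟨u, huB, h3, (h2 huB).trans h1⟩
      · rw [not_frequently] at hacc
        obtain ⟨c, hc, hcs⟩ := mem_nhdsGT_iff_exists_Ioo_subset.1 hacc
        have hne : (B ∩ Ici c).Nonempty := by
          refine ⟨b, hbB, ?_⟩
          by_contra hlt
          exact hcs ⟨tlt, not_le.1 hlt⟩ hbB
        have hcl : IsClosed (B ∩ Ici c) := hB.inter isClosed_Ici
        have hbd : BddBelow (B ∩ Ici c) := ⟨c, fun x hx => hx.2⟩
        have hd := hcl.csInf_mem hne hbd
        set d := sInf (B ∩ Ici c) with hdd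
        have htd : t < d := lt_of_lt_of_le hc hd.2
        refine ⟨d, hd.1, htd, (hgap t hmem.2 d hd.1 htd ?_).trans ?_⟩
        · ext x
          simp only [mem_inter_iff, mem_Ioo, mem_empty_iff_false, iff_false, not_and]
          intro hx hxB
          by_cases hxc : x < c
          · exact hcs ⟨hx.1, hxc⟩ hxB
          · exact absurd (csInf_le hbd ⟨hxB, not_lt.1 hxc⟩) (not_le.2 hx.2)
        · have hda := hsub hd.1
          have I : Ioc t d ⊆ Icc a b := fun x hx => ⟨htab.1.trans hx.1.le, hx.2.trans hda.2⟩
          rw [intervalIntegral.integral_of_le htd.le, intervalIntegral.integral_of_le htd.le]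
          apply setIntegral_mono_ae_restrict
          · exact hIntg.mono_set I
          · exact G'int.mono_set I
          · have C1 : ∀ᵐ x : ℝ ∂volume.restrict (Ioc t d), G' x < ⊤ :=
              ae_mono (Measure.restrict_mono I le_rfl) G'lt_top
            filter_upwards [C1] with x G'x
            apply EReal.coe_le_coe_iff.1
            rw [EReal.coe_toReal G'x.ne (f_lt_G' x).ne_bot]
            exact (f_lt_G' x).le
    obtain ⟨u, huB, htu, hu⟩ := key
    have : u ∈ s := by
      refine ⟨?_, huB⟩
      have h1 := hmem.1
      simp only [mem_ofPred_eq] at h1 ⊢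
      rw [← intervalIntegral.integral_add_adjacent_intervals
        (hGii a (left_mem_Icc.2 hab) t htab) (hGii t htab u (hsub huB))]
      linarith
    exact absurd (le_csSup hbdd this) (not_le.2 htu)
  have h1 := hmem.1
  rw [htb] at h1
  simp only [mem_ofPred_eq] at h1
  rw [integral_Icc_eq_integral_Ioc, ← intervalIntegral.integral_of_le hab,
    integral_Icc_eq_integral_Ioc, ← intervalIntegral.integral_of_le hab] at hG'
  linarith

theorem ftc_closed {B : Set ℝ} {a b : ℝ} {g h : ℝ → ℝ} (hab : a ≤ b) (hB : IsClosed B)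
    (haB : a ∈ B) (hbB : b ∈ B)
    (hsub : B ⊆ Icc a b)
    (hIntg : IntegrableOn h (Icc a b))
    (hgap : ∀ c ∈ B, ∀ d ∈ B, c < d → Ioo c d ∩ B = ∅ → g d - g c = ∫ r in c..d, h r)
    (hder : ∀ c ∈ B, HasDerivWithinAt g (h c) B c) :
    g b - g a = ∫ r in a..b, h r := by
  apply le_antisymm
  · exact ftc_closed_le hab hB haB hbB hsub hIntg (fun c hc d hd h1 h2 => (hgap c hc d hd h1 h2).le) hder
  · have := ftc_closed_le (g := fun x => - g x) (h := fun x => - h x) hab hB haB hbB hsub hIntg.neg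
      (fun c hc d hd h1 h2 => by
        have := hgap c hc d hd h1 h2
        rw [intervalIntegral.integral_neg]; linarith) (fun c hc => (hder c hc).neg)
    rw [intervalIntegral.integral_neg] at this
    linarith
end WB

namespace WB
open Set Filter Topology
open scoped ENNReal NNReal

noncomputable def wt (z : ℝ × ℝ) : ℝ≥0∞ := ENNReal.ofReal (1 + z.1 ^ 2)

noncomputable def nrm (φ : ℝ × ℝ → ℝ) : ℝ≥0∞ := ∫⁻ z : ℝ × ℝ, wt z * ‖φ z‖ₑ

theorem measurable_wt : Measurable wt := by unfold wt; fun_prop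

theorem one_le_wt (z : ℝ × ℝ) : 1 ≤ wt z := by
  unfold wt
  rw [ENNReal.one_le_ofReal]
  nlinarith [sq_nonneg z.1]

theorem mp_shear (t : ℝ) :
    MeasurePreserving (fun z : ℝ × ℝ => (z.1, z.2 + z.1 * t)) volume volume := by
  have := MeasurePreserving.skew_product (μa := (volume : Measure ℝ)) (μb := (volume : Measure ℝ))
    (μc := (volume : Measure ℝ)) (μd := (volume : Measure ℝ)) (f := fun v => v)
    (g := fun v x => x + v * t) (MeasurePreserving.id _) (by fun_prop)
    (Filter.Eventually.of_forall fun v => (measurePreserving_add_right volume (v * t)).map_eq)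
  exact this

noncomputable def fz (f : ℝ → ℝ → ℝ → ℝ) (t : ℝ) (z : ℝ × ℝ) : ℝ := f t z.2 z.1
noncomputable def sh (f : ℝ → ℝ → ℝ → ℝ) (t : ℝ) (z : ℝ × ℝ) : ℝ := f t (z.2 + z.1 * t) z.1
noncomputable def nn (f : ℝ → ℝ → ℝ → ℝ) (t : ℝ) : ℝ≥0∞ := nrm (fz f t)

theorem lint_shear (t : ℝ) {φ : ℝ × ℝ → ℝ≥0∞} (hφ : Measurable φ) :
    ∫⁻ z : ℝ × ℝ, φ (z.1, z.2 + z.1 * t) = ∫⁻ z, φ z :=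
  (mp_shear t).lintegral_comp hφ

theorem nrm_sh (f : ℝ → ℝ → ℝ → ℝ) (t : ℝ) (hf : Measurable (fz f t)) :
    nrm (sh f t) = nrm (fz f t) :=
  lint_shear t (φ := fun z => wt z * ‖fz f t z‖ₑ) (measurable_wt.mul hf.enorm)

def S2 (f : ℝ → ℝ → ℝ → ℝ) (N : ℕ) (t : ℝ) : Prop :=
  ∀ y v h k : ℝ, |k * (f t (y + h) v - f t y v) - h * (f t (y + k) v - f t y v)|
    ≤ N * (|h| * |k| * (|h| + |k|))

structure Core (f F : ℝ → ℝ → ℝ → ℝ) (C : ℝ≥0) : Prop where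
  cont_t : ∀ x v, Continuous fun t => f t x v
  cont_z : ∀ t, Continuous (fz f t)
  meas_F : Measurable fun p : ℝ × (ℝ × ℝ) => fz F p.1 p.2
  fin : ∀ t, nn f t < ⊤
  der : ∀ t x v, ∃ a b, HasDerivAt (fun s => f s x v) a t ∧ HasDerivAt (fun y => f t y v) b x ∧
    F t x v = a + v * b
  s2 : ∀ t, ∃ N : ℕ, S2 f N t
  bd : ∀ t, nn F t ≤ C * nn f t

namespace Core
variable {f F : ℝ → ℝ → ℝ → ℝ} {C : ℝ≥0}

theorem meas_f (h : Core f F C) : Measurable fun p : ℝ × (ℝ × ℝ) => fz f p.1 p.2 :=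
  measurable_uncurry_of_continuous_of_measurable (u := fz f) (fun z => h.cont_t z.2 z.1)
    (fun t => (h.cont_z t).measurable)

theorem meas_g (h : Core f F C) : Measurable fun p : ℝ × (ℝ × ℝ) => sh f p.1 p.2 :=
  h.meas_f.comp (f := fun p : ℝ × (ℝ × ℝ) => (p.1, (p.2.1, p.2.2 + p.2.1 * p.1))) (by fun_prop)

theorem meas_H (h : Core f F C) : Measurable fun p : ℝ × (ℝ × ℝ) => sh F p.1 p.2 :=
  h.meas_F.comp (f := fun p : ℝ × (ℝ × ℝ) => (p.1, (p.2.1, p.2.2 + p.2.1 * p.1))) (by fun_prop)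

theorem meas_gt (h : Core f F C) (t : ℝ) : Measurable (sh f t) :=
  h.meas_g.comp (measurable_prodMk_left (x := t))

theorem meas_Ht (h : Core f F C) (t : ℝ) : Measurable (sh F t) :=
  h.meas_H.comp (measurable_prodMk_left (x := t))

theorem meas_Hz (h : Core f F C) (z : ℝ × ℝ) : Measurable (fun t => sh F t z) :=
  h.meas_H.comp (measurable_prodMk_right (y := z))

theorem nrm_g (h : Core f F C) (t : ℝ) : nrm (sh f t) = nn f t :=
  nrm_sh f t (h.cont_z t).measurable

theorem nrm_H (h : Core f F C) (t : ℝ) : nrm (sh F t) ≤ C * nn f t := by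
  rw [nrm_sh F t (h.meas_F.comp (measurable_prodMk_left (x := t)))]
  exact h.bd t

theorem closed_n (h : Core f F C) (N : ℝ≥0∞) : IsClosed {t | nn f t ≤ N} := by
  apply IsSeqClosed.isClosed
  intro s a hs hsa
  have : nn f a = ∫⁻ z, liminf (fun k => wt z * ‖fz f (s k) z‖ₑ) atTop := by
    unfold nn nrm
    congr 1
    ext z
    refine (Tendsto.liminf_eq ?_).symm
    refine ENNReal.Tendsto.const_mul ?_ (Or.inr (by simp [wt]))
    exact (((h.cont_t z.2 z.1).tendsto a).comp hsa).enorm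
  show nn f a ≤ N
  rw [this]
  refine (lintegral_liminf_le fun k => measurable_wt.mul (h.cont_z (s k)).measurable.enorm).trans ?_
  refine liminf_le_of_frequently_le' (Frequently.of_forall fun k => hs k)

theorem closed_S2 (h : Core f F C) (N : ℕ) : IsClosed {t | S2 f N t} := by
  have : {t | S2 f N t} = ⋂ (y : ℝ) (v : ℝ) (h : ℝ) (k : ℝ),
      {t | |k * (f t (y + h) v - f t y v) - h * (f t (y + k) v - f t y v)|
    ≤ N * (|h| * |k| * (|h| + |k|))} := by
    ext t; simp [S2]
  rw [this]
  refine isClosed_iInter fun y => isClosed_iInter fun v => isClosed_iInter fun a =>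
    isClosed_iInter fun k => isClosed_le ?_ continuous_const
  have h1 := h.cont_t (y + a) v
  have h2 := h.cont_t y v
  have h3 := h.cont_t (y + k) v
  fun_prop

/-- weighted norm of the time integral of `|H|`. -/
theorem fub (h : Core f F C) (A : Set ℝ) (N : ℝ≥0∞) (hA : MeasurableSet A)
    (hN : ∀ t ∈ A, nn f t ≤ N) :
    ∫⁻ z, wt z * ∫⁻ r in A, ‖sh F r z‖ₑ ≤ C * N * volume A := by
  have e1 : ∀ z, wt z * ∫⁻ r in A, ‖sh F r z‖ₑ = ∫⁻ r in A, wt z * ‖sh F r z‖ₑ := fun z =>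
    (lintegral_const_mul _ (h.meas_Hz z).enorm).symm
  simp_rw [e1]
  rw [lintegral_lintegral_swap]
  · calc ∫⁻ r in A, ∫⁻ z, wt z * ‖sh F r z‖ₑ ≤ ∫⁻ r in A, C * N := by
          refine setLIntegral_mono' hA fun r hr => (h.nrm_H r).trans ?_
          gcongr
          exact hN r hr
      _ = _ := by rw [lintegral_const]; simp
  · refine Measurable.aemeasurable ?_
    exact (measurable_wt.comp measurable_fst).mul (h.meas_H.comp measurable_swap).enorm

theorem ae_int (h : Core f F C) (A : Set ℝ) (N : ℝ≥0∞) (hA : MeasurableSet A) (hv : volume A ≠ ⊤)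
    (hNt : N ≠ ⊤) (hN : ∀ t ∈ A, nn f t ≤ N) :
    ∀ᵐ z : ℝ × ℝ, IntegrableOn (fun r => sh F r z) A := by
  have h1 := h.fub A N hA hN
  have h2 : ∫⁻ z, wt z * ∫⁻ r in A, ‖sh F r z‖ₑ ≠ ⊤ :=
    ne_top_of_le_ne_top (ENNReal.mul_ne_top (ENNReal.mul_ne_top (by simp) hNt) hv) h1
  have h3 := ae_lt_top' ?_ h2
  · filter_upwards [h3] with z hz
    refine ⟨(h.meas_Hz z).aestronglyMeasurable, ?_⟩
    refine lt_of_le_of_lt ?_ hz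
    calc ∫⁻ r in A, ‖sh F r z‖ₑ = 1 * ∫⁻ r in A, ‖sh F r z‖ₑ := (one_mul _).symm
      _ ≤ _ := by gcongr; exact one_le_wt z
  · refine Measurable.aemeasurable ?_
    refine measurable_wt.mul ?_
    exact (h.meas_H.comp measurable_swap).enorm.lintegral_prod_right'

def D (f F : ℝ → ℝ → ℝ → ℝ) (s t : ℝ) : Prop :=
  ∀ᵐ z : ℝ × ℝ, sh f t z - sh f s z = ∫ r in s..t, sh F r z

theorem D_norm (h : Core f F C) {s t : ℝ} {N : ℝ≥0∞} (hD : D f F s t)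
    (hN : ∀ r ∈ uIcc s t, nn f r ≤ N) :
    nrm (fun z => sh f t z - sh f s z) ≤ C * N * ENNReal.ofReal |t - s| := by
  refine le_trans ?_ ((h.fub (uIoc s t) N measurableSet_uIoc
    (fun r hr => hN r (uIoc_subset_uIcc hr))).trans (le_of_eq ?_))
  · refine lintegral_mono_ae ?_
    filter_upwards [hD] with z hz
    gcongr
    rw [hz, intervalIntegral.intervalIntegral_eq_integral_uIoc, enorm_smul]
    calc _ ≤ 1 * ‖∫ r in uIoc s t, sh F r z‖ₑ := by
            gcongr
            split_ifs <;> simp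
      _ ≤ _ := by rw [one_mul]; exact enorm_integral_le_lintegral_enorm _
  · rw [show uIoc s t = Ioc (min s t) (max s t) from rfl, Real.volume_Ioc, max_sub_min_eq_abs]

theorem nrm_add_le {φ ψ : ℝ × ℝ → ℝ} (hφ : Measurable φ) :
    nrm (fun z => φ z + ψ z) ≤ nrm φ + nrm ψ := by
  unfold nrm
  have hm : Measurable fun z => wt z * ‖φ z‖ₑ := measurable_wt.mul hφ.enorm
  rw [← lintegral_add_left hm]
  refine lintegral_mono fun z => ?_
  rw [← mul_add]
  gcongr
  exact enorm_add_le _ _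

theorem D_symm {s t : ℝ} (hD : D f F s t) : D f F t s := by
  filter_upwards [hD] with z hz
  rw [intervalIntegral.integral_symm, ← hz]; ring

theorem D_bound (h : Core f F C) {s t : ℝ} {N : ℝ≥0∞} (hD : D f F s t)
    (hN : ∀ r ∈ uIcc s t, nn f r ≤ N) :
    nn f t ≤ nn f s + C * N * ENNReal.ofReal |t - s| := by
  rw [← h.nrm_g t, ← h.nrm_g s]
  have : sh f t = fun z => sh f s z + (sh f t z - sh f s z) := by ext z; ring
  rw [this]
  refine (nrm_add_le (h.meas_gt s)).trans ?_
  gcongr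
  exact h.D_norm hD hN

theorem D_trans (h : Core f F C) {s t u : ℝ} {N : ℝ≥0∞} (hNt : N ≠ ⊤)
    (hN : ∀ r ∈ uIcc s t, nn f r ≤ N) (hN' : ∀ r ∈ uIcc t u, nn f r ≤ N)
    (h1 : D f F s t) (h2 : D f F t u) : D f F s u := by
  filter_upwards [h1, h2, h.ae_int (uIcc s t) N measurableSet_uIcc (by simp [uIcc]) hNt hN,
    h.ae_int (uIcc t u) N measurableSet_uIcc (by simp [uIcc]) hNt hN'] with z z1 z2 z3 z4
  rw [← intervalIntegral.integral_add_adjacent_intervals (b := t), ← z1, ← z2]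
  · ring
  · exact intervalIntegrable_iff.2 (z3.mono_set uIoc_subset_uIcc)
  · exact intervalIntegrable_iff.2 (z4.mono_set uIoc_subset_uIcc)

theorem closed_graph (h : Core f F C) {s : ℕ → ℝ} {a : ℝ} (hs : Tendsto s atTop (𝓝 a))
    {φ : ℝ × ℝ → ℝ} (hφ : Integrable φ)
    (hlim : Tendsto (fun k => ∫⁻ z, ‖sh f (s k) z - φ z‖ₑ) atTop (𝓝 0)) :
    ∀ᵐ z, sh f a z = φ z := by
  have key : ∫⁻ z, ‖sh f a z - φ z‖ₑ ≤ 0 := by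
    refine le_of_forall_pos_le_add fun ε hε => ?_
    rw [zero_add]
    have hε2 : ε / 2 ≠ 0 := (ENNReal.half_pos hε.ne').ne'
    obtain ⟨ψ, -, hψ1, hψc, hψi⟩ := hφ.exists_hasCompactSupport_lintegral_sub_le hε2
    have hms : ∀ r, Measurable fun z : ℝ × ℝ => fz f r z - ψ (z.1, z.2 - z.1 * r) := fun r =>
      ((h.cont_z r).measurable).sub (hψc.measurable.comp (by fun_prop))
    have e : ∀ r, ∫⁻ z, ‖sh f r z - ψ z‖ₑ = ∫⁻ z, ‖fz f r z - ψ (z.1, z.2 - z.1 * r)‖ₑ := by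
      intro r
      rw [← lint_shear r (hms r).enorm]
      simp [sh, fz]
    have h1 : ∫⁻ z, ‖sh f a z - ψ z‖ₑ ≤ ε / 2 := by
      rw [e a]
      calc ∫⁻ z, ‖fz f a z - ψ (z.1, z.2 - z.1 * a)‖ₑ
          = ∫⁻ z, liminf (fun k => ‖fz f (s k) z - ψ (z.1, z.2 - z.1 * s k)‖ₑ) atTop := by
            congr 1; ext z
            refine (Tendsto.liminf_eq ?_).symm
            refine Tendsto.enorm (Tendsto.sub (((h.cont_t z.2 z.1).tendsto a).comp hs) ?_)
            exact ((hψc.comp (by fun_prop : Continuous fun r => (z.1, z.2 - z.1 * r))).tendsto a).comp hs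
        _ ≤ liminf (fun k => ∫⁻ z, ‖fz f (s k) z - ψ (z.1, z.2 - z.1 * s k)‖ₑ) atTop :=
            lintegral_liminf_le fun k => (hms (s k)).enorm
        _ ≤ liminf (fun k => (∫⁻ z, ‖sh f (s k) z - φ z‖ₑ) + ε / 2) atTop := by
            refine liminf_le_liminf (Eventually.of_forall fun k => ?_)
            rw [← e (s k)]
            calc ∫⁻ z, ‖sh f (s k) z - ψ z‖ₑ
                ≤ ∫⁻ z, (‖sh f (s k) z - φ z‖ₑ + ‖φ z - ψ z‖ₑ) := by
                  refine lintegral_mono fun z => ?_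
                  have : sh f (s k) z - ψ z = (sh f (s k) z - φ z) + (φ z - ψ z) := by ring
                  rw [this]; exact enorm_add_le _ _
              _ = _ := lintegral_add_right' _
                  (hφ.aestronglyMeasurable.sub hψi.aestronglyMeasurable).enorm
              _ ≤ _ := by gcongr
        _ = ε / 2 := by
            have := hlim.add_const (ε / 2)
            rw [zero_add] at this
            exact this.liminf_eq
    calc ∫⁻ z, ‖sh f a z - φ z‖ₑ ≤ ∫⁻ z, (‖sh f a z - ψ z‖ₑ + ‖φ z - ψ z‖ₑ) := by
          refine lintegral_mono fun z => ?_
          have : sh f a z - φ z = (sh f a z - ψ z) - (φ z - ψ z) := by ring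
          rw [this]; exact enorm_sub_le
      _ = _ := lintegral_add_right' _
            (hφ.aestronglyMeasurable.sub hψi.aestronglyMeasurable).enorm
      _ ≤ ε / 2 + ε / 2 := by gcongr
      _ = ε := ENNReal.add_halves ε
  have h0 : ∫⁻ z, ‖sh f a z - φ z‖ₑ = 0 := le_antisymm key (zero_le)
  rw [lintegral_eq_zero_iff'] at h0
  · filter_upwards [h0] with z hz
    simpa [sub_eq_zero] using hz
  · exact ((h.meas_gt a).aestronglyMeasurable.sub hφ.aestronglyMeasurable).enorm

end Core
end WB

namespace WB
open Set Filter Topology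
open scoped ENNReal NNReal
namespace Core
variable {f F : ℝ → ℝ → ℝ → ℝ} {C : ℝ≥0}

def Good (f F : ℝ → ℝ → ℝ → ℝ) (a b : ℝ) : Prop :=
  (∃ N : ℝ≥0∞, N ≠ ⊤ ∧ ∀ t ∈ Icc a b, nn f t ≤ N) ∧
    ∀ s ∈ Icc a b, ∀ t ∈ Icc a b, D f F s t

theorem Good.mono {a b c d : ℝ} (h : Good f F a b) (hs : Icc c d ⊆ Icc a b) : Good f F c d := by
  obtain ⟨⟨N, hN, h1⟩, h2⟩ := h
  exact ⟨⟨N, hN, fun t ht => h1 t (hs ht)⟩, fun s hs' t ht => h2 s (hs hs') t (hs ht)⟩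

theorem Good.trans (h : Core f F C) {a b c : ℝ} (hab : a ≤ b) (hbc : b ≤ c)
    (h1 : Good f F a b) (h2 : Good f F b c) : Good f F a c := by
  obtain ⟨⟨N, hN, h1⟩, h1'⟩ := h1
  obtain ⟨⟨M, hM, h2⟩, h2'⟩ := h2
  have hb : ∀ t ∈ Icc a c, nn f t ≤ max N M := by
    intro t ht
    rcases le_total t b with htb | htb
    · exact (h1 t ⟨ht.1, htb⟩).trans (le_max_left _ _)
    · exact (h2 t ⟨htb, ht.2⟩).trans (le_max_right _ _)
  have hNM : max N M ≠ ⊤ := by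
    rcases max_choice N M with h | h <;> rw [h] <;> assumption
  refine ⟨⟨max N M, hNM, hb⟩, ?_⟩
  have hbm : b ∈ Icc a c := ⟨hab, hbc⟩
  have hDb : ∀ s ∈ Icc a c, D f F s b := by
    intro s hs
    rcases le_total s b with htb | htb
    · exact h1' s ⟨hs.1, htb⟩ b ⟨hab, le_rfl⟩
    · exact h2' s ⟨htb, hs.2⟩ b ⟨le_rfl, hbc⟩
  intro s hs t ht
  exact h.D_trans hNM (fun r hr => hb r (uIcc_subset_Icc hs hbm hr))
    (fun r hr => hb r (uIcc_subset_Icc hbm ht hr)) (hDb s hs) (D_symm (hDb t ht))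

def Om (f F : ℝ → ℝ → ℝ → ℝ) : Set ℝ := {t | ∃ a b, a < t ∧ t < b ∧ Good f F a b}

theorem isOpen_Om : IsOpen (Om f F) := by
  rw [isOpen_iff_mem_nhds]
  rintro t ⟨a, b, h1, h2, h3⟩
  filter_upwards [Ioo_mem_nhds h1 h2] with s hs
  exact ⟨a, b, hs.1, hs.2, h3⟩

theorem D_refl (a : ℝ) : D f F a a := by
  refine Eventually.of_forall fun z => by simp

theorem good_refl (h : Core f F C) (a : ℝ) : Good f F a a := by
  refine ⟨⟨nn f a, (h.fin a).ne, fun t ht => ?_⟩, fun s hs t ht => ?_⟩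
  · rw [Icc_self] at ht; rw [mem_singleton_iff.1 ht]
  · rw [Icc_self] at ht hs; rw [mem_singleton_iff.1 ht, mem_singleton_iff.1 hs]; exact D_refl a

theorem good_of_subset (h : Core f F C) {a b : ℝ} (hab : a ≤ b) (hs : Icc a b ⊆ Om f F) :
    Good f F a b := by
  obtain ⟨t, t0, tm, ⟨m, hm⟩, hi⟩ := exists_monotone_Icc_subset_open_cover_Icc hab
    (ι := {p : ℝ × ℝ // Good f F p.1 p.2}) (c := fun p => Subtype.val ⁻¹' Ioo p.1.1 p.1.2)
    (fun i => isOpen_Ioo.preimage continuous_subtype_val) (by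
      rintro ⟨x, hx⟩ -
      obtain ⟨p, q, h1, h2, h3⟩ := hs hx
      exact mem_iUnion.2 ⟨⟨(p, q), h3⟩, h1, h2⟩)
  have key : ∀ n, Good f F a (t n) := by
    intro n
    induction n with
    | zero => rw [t0]; exact h.good_refl a
    | succ n ih =>
      refine Good.trans h (t n).2.1 (tm (Nat.le_succ n)) ih ?_
      obtain ⟨⟨⟨p, q⟩, hpq⟩, hsub⟩ := hi n
      refine hpq.mono fun x hx => ?_
      have : (⟨x, (t n).2.1.trans hx.1, hx.2.trans (t (n+1)).2.2⟩ : Icc a b) ∈ Icc (t n) (t (n+1)) := hx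
      have := hsub this
      exact ⟨this.1.le, this.2.le⟩
  have := key m
  rwa [hm m le_rfl] at this

theorem integrable_g (h : Core f F C) (t : ℝ) : Integrable (sh f t) := by
  refine ⟨(h.meas_gt t).aestronglyMeasurable, ?_⟩
  refine lt_of_le_of_lt ?_ (h.fin t)
  rw [← h.nrm_g]
  refine lintegral_mono fun z => ?_
  calc ‖sh f t z‖ₑ = 1 * ‖sh f t z‖ₑ := (one_mul _).symm
      _ ≤ _ := by gcongr; exact one_le_wt z

theorem lint_prim (h : Core f F C) {s t : ℝ} {N : ℝ≥0∞} (hN : ∀ r ∈ uIcc s t, nn f r ≤ N) :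
    ∫⁻ z, ‖∫ r in s..t, sh F r z‖ₑ ≤ C * N * ENNReal.ofReal |t - s| := by
  refine le_trans ?_ ((h.fub (uIoc s t) N measurableSet_uIoc
    (fun r hr => hN r (uIoc_subset_uIcc hr))).trans (le_of_eq ?_))
  · refine lintegral_mono fun z => ?_
    rw [intervalIntegral.intervalIntegral_eq_integral_uIoc, enorm_smul]
    calc _ ≤ 1 * ‖∫ r in uIoc s t, sh F r z‖ₑ := by
            gcongr
            split_ifs <;> simp
      _ ≤ wt z * _ := by gcongr; exact one_le_wt z; exact enorm_integral_le_lintegral_enorm _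
  · rw [show uIoc s t = Ioc (min s t) (max s t) from rfl, Real.volume_Ioc, max_sub_min_eq_abs]

theorem meas_prim (h : Core f F C) (s t : ℝ) :
    StronglyMeasurable fun z : ℝ × ℝ => ∫ r in s..t, sh F r z := by
  simp_rw [intervalIntegral.intervalIntegral_eq_integral_uIoc]
  have h1 : StronglyMeasurable fun z : ℝ × ℝ => ∫ r in uIoc s t, sh F r z :=
    StronglyMeasurable.integral_prod_right (f := fun z r => sh F r z)
      (h.meas_H.comp measurable_swap).stronglyMeasurable
  exact h1.const_smul (if s ≤ t then (1 : ℝ) else -1)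

theorem D_end (h : Core f F C) {a b c e : ℝ} {N : ℝ≥0∞} (hNt : N ≠ ⊤) (hc : c ∈ Ioo a b)
    (he : e ∈ Icc a b) (hN : ∀ r ∈ Icc a b, nn f r ≤ N) (hD : ∀ s ∈ Ioo a b, D f F s c) :
    D f F e c := by
  have hab : a < b := hc.1.trans hc.2
  have hcI : c ∈ Icc a b := Ioo_subset_Icc_self hc
  have hecl : e ∈ closure (Ioo a b) := by rwa [closure_Ioo hab.ne]
  obtain ⟨s, hsI, hs⟩ := mem_closure_iff_seq_limit.1 hecl
  have hIntg := h.ae_int (Icc a b) N measurableSet_Icc (by simp) hNt hN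
  have hφ : Integrable fun z => sh f c z - ∫ r in e..c, sh F r z := by
    refine (h.integrable_g c).sub ⟨(h.meas_prim e c).aestronglyMeasurable, ?_⟩
    refine lt_of_le_of_lt (h.lint_prim (N := N) fun r hr => hN r (uIcc_subset_Icc he hcI hr)) ?_
    exact ENNReal.mul_lt_top (ENNReal.mul_lt_top (by simp) hNt.lt_top) (by simp)
  have := h.closed_graph hs hφ ?_
  · filter_upwards [this] with z hz
    rw [hz]; ring
  · have hb : ∀ k, ∫⁻ z, ‖sh f (s k) z - (sh f c z - ∫ r in e..c, sh F r z)‖ₑ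
        ≤ C * N * ENNReal.ofReal |s k - e| := by
      intro k
      have hskI := Ioo_subset_Icc_self (hsI k)
      refine le_trans (le_of_eq ?_) (h.lint_prim (s := e) (t := s k) (N := N)
        fun r hr => hN r (uIcc_subset_Icc he hskI hr))
      refine lintegral_congr_ae ?_
      filter_upwards [hD (s k) (hsI k), hIntg] with z hz hi
      have ii : ∀ x ∈ Icc a b, ∀ y ∈ Icc a b, IntervalIntegrable (fun r => sh F r z) volume x y := by
        intro x hx y hy
        exact intervalIntegrable_iff.2 (hi.mono_set (uIoc_subset_uIcc.trans (uIcc_subset_Icc hx hy)))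
      have e1 := intervalIntegral.integral_add_adjacent_intervals (ii e he (s k) hskI) (ii (s k) hskI c hcI)
      congr 1
      linarith
    refine tendsto_of_tendsto_of_tendsto_of_le_of_le tendsto_const_nhds ?_ (fun k => zero_le) hb
    have t1 : Tendsto (fun k => |s k - e|) atTop (𝓝 0) := by
      have := (hs.sub_const e).abs
      simpa using this
    have t2 := ENNReal.tendsto_ofReal t1
    have t3 := ENNReal.Tendsto.const_mul (a := (C : ℝ≥0∞) * N) t2
      (Or.inr (ENNReal.mul_ne_top (by simp) hNt))
    simpa using t3

theorem Good.half (h : Core f F C) {a b : ℝ} (hG : Good f F a b)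
    (hC : (C : ℝ≥0∞) * ENNReal.ofReal (b - a) ≤ 1 / 2) {r s : ℝ} (hr : r ∈ Icc a b)
    (hs : s ∈ Icc a b) : nn f r ≤ 2 * nn f s := by
  obtain ⟨⟨N, hN, h1⟩, h2⟩ := hG
  set S := ⨆ t ∈ Icc a b, nn f t with hS
  have hle : ∀ t ∈ Icc a b, nn f t ≤ S := fun t ht => le_iSup₂ (f := fun t _ => nn f t) t ht
  have hSN : S ≤ N := iSup₂_le h1
  have hSt : S ≠ ⊤ := ne_top_of_le_ne_top hN hSN
  have hb : S ≤ nn f s + S / 2 := by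
    refine iSup₂_le fun t ht => ?_
    refine (h.D_bound (N := S) (h2 s hs t ht) fun r hr => hle r (uIcc_subset_Icc hs ht hr)).trans ?_
    gcongr
    calc (C : ℝ≥0∞) * S * ENNReal.ofReal |t - s| ≤ C * S * ENNReal.ofReal (b - a) := by
          gcongr
          rw [abs_le]; constructor <;> linarith [hs.1, hs.2, ht.1, ht.2]
      _ = S * (C * ENNReal.ofReal (b - a)) := by ring
      _ ≤ S * (1 / 2) := by gcongr
      _ = S / 2 := by rw [mul_one_div]
  have hb2 : S / 2 ≤ nn f s := by
    have h3 : S / 2 + S / 2 ≤ nn f s + S / 2 := by rwa [ENNReal.add_halves]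
    exact (ENNReal.add_le_add_iff_right (ENNReal.div_ne_top hSt (by simp))).1 h3
  calc nn f r ≤ S := hle r hr
    _ = 2 * (S / 2) := by rw [two_mul, ENNReal.add_halves]
    _ ≤ _ := by gcongr

theorem gap (h : Core f F C) {a b : ℝ} (hab : a < b) (hC : (C : ℝ≥0∞) * ENNReal.ofReal (b - a) ≤ 1 / 2)
    (hO : Ioo a b ⊆ Om f F) : Good f F a b := by
  obtain ⟨c, hc⟩ := nonempty_Ioo.2 hab
  have hG : ∀ r ∈ Ioo a b, Good f F (min r c) (max r c) := fun r hr =>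
    h.good_of_subset min_le_max fun x hx =>
      hO ⟨(lt_min hr.1 hc.1).trans_le hx.1, hx.2.trans_lt (max_lt hr.2 hc.2)⟩
  have hm : ∀ r, r ∈ Icc (min r c) (max r c) := fun r => ⟨min_le_left _ _, le_max_left _ _⟩
  have hm' : ∀ r, c ∈ Icc (min r c) (max r c) := fun r => ⟨min_le_right _ _, le_max_right _ _⟩
  have hle : ∀ r ∈ Ioo a b, nn f r ≤ 2 * nn f c := by
    intro r hr
    refine (hG r hr).half h (le_trans ?_ hC) (hm r) (hm' r)
    gcongr
    · exact max_le hr.2.le hc.2.le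
    · exact le_min hr.1.le hc.1.le
  set N := 2 * nn f c + nn f a + nn f b with hN
  have hNt : N ≠ ⊤ := by
    simp [hN, (h.fin _).ne, ENNReal.mul_eq_top]
  have hNb : ∀ r ∈ Icc a b, nn f r ≤ N := by
    intro r hr
    rcases eq_or_lt_of_le hr.1 with h1 | h1
    · rw [← h1, hN, add_assoc, add_left_comm]; exact le_self_add
    rcases eq_or_lt_of_le hr.2 with h2 | h2
    · rw [h2]; exact le_add_self
    · exact (hle r ⟨h1, h2⟩).trans (by rw [hN, add_assoc]; exact le_self_add)
  have hDc : ∀ e ∈ Icc a b, D f F e c := fun e he =>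
    h.D_end hNt hc he hNb fun s hs => (hG s hs).2 s (hm s) c (hm' s)
  refine ⟨⟨N, hNt, hNb⟩, fun s hs t ht => ?_⟩
  have hcI := Ioo_subset_Icc_self hc
  exact h.D_trans hNt (fun r hr => hNb r (uIcc_subset_Icc hs hcI hr))
    (fun r hr => hNb r (uIcc_subset_Icc hcI ht hr)) (hDc s hs) (D_symm (hDc t ht))

theorem der_within (h : Core f F C) {A : Set ℝ} {N : ℕ} (hA : ∀ t ∈ A, S2 f N t) {a : ℝ} (ha : a ∈ A)
    (z : ℝ × ℝ) : HasDerivWithinAt (fun t => sh f t z) (sh F a z) A a := by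
  obtain ⟨v, x⟩ := z
  obtain ⟨p, b, hp, hb, hF⟩ := h.der a (x + v * a) v
  set y := x + v * a with hy
  have e1 : (fun t => sh f t (v, x)) =
      fun t => (f t (y + v * (t - a)) v - f t y v) + f t y v := by
    ext t; simp only [sh, hy, sub_add_cancel]; congr 1; ring
  have e2 : sh F a (v, x) = v * b + p := by
    show F a (x + v * a) v = _
    rw [← hy, hF]; ring
  rw [e1, e2]
  refine HasDerivWithinAt.add ?_ hp.hasDerivWithinAt
  rw [hasDerivWithinAt_iff_isLittleO, Asymptotics.isLittleO_iff]
  intro ε hε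
  set η := ε / (4 * (|v| + 1)) with hη
  have hvp : 0 < |v| + 1 := by positivity
  have hηp : 0 < η := by positivity
  have hsl := hasDerivAt_iff_tendsto_slope_zero.1 hb
  have k1 : ∀ᶠ k in 𝓝[≠] (0 : ℝ), |k⁻¹ * (f a (y + k) v - f a y v) - b| < η := by
    have := (Metric.tendsto_nhds.1 hsl) η hηp
    simpa [Real.dist_eq] using this
  have k2 : ∀ᶠ k in 𝓝[≠] (0 : ℝ), N * |k| < η := by
    have : Tendsto (fun k : ℝ => N * |k|) (𝓝[≠] 0) (𝓝 (N * |0|)) :=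
      ((continuous_const.mul continuous_abs).tendsto (0:ℝ)).mono_left nhdsWithin_le_nhds
    rw [abs_zero, mul_zero] at this
    exact this.eventually_lt_const hηp
  obtain ⟨k, ⟨hk1, hk2⟩, hk0⟩ := ((k1.and k2).and self_mem_nhdsWithin).exists
  have hk0 : k ≠ 0 := hk0
  have t1 : ∀ᶠ t in 𝓝[A] a, |k⁻¹ * (f t (y + k) v - f t y v) - k⁻¹ * (f a (y + k) v - f a y v)| < η := by
    have hc : Continuous fun t => |k⁻¹ * (f t (y + k) v - f t y v) - k⁻¹ * (f a (y + k) v - f a y v)| := by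
      have h1 := h.cont_t (y + k) v
      have h2 := h.cont_t y v
      fun_prop
    have := hc.tendsto a
    simp only [sub_self, abs_zero] at this
    exact (this.mono_left nhdsWithin_le_nhds).eventually_lt_const hηp
  have t2 : ∀ᶠ t in 𝓝[A] a, N * |v * (t - a)| < η := by
    have hc : Continuous fun t => N * |v * (t - a)| := by fun_prop
    have := hc.tendsto a
    simp only [sub_self, abs_zero, mul_zero] at this
    exact (this.mono_left nhdsWithin_le_nhds).eventually_lt_const hηp
  filter_upwards [t1, t2, self_mem_nhdsWithin] with t h1 h2 htA
  have hS := hA t htA y v (v * (t - a)) k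
  simp only [Real.norm_eq_abs, sub_self, mul_zero, add_zero, sub_zero, smul_eq_mul]
  set m := v * (t - a) with hm
  set E := f t (y + m) v - f t y v with hE
  set q := f t (y + k) v - f t y v with hq
  have hkp : 0 < |k| := abs_pos.2 hk0
  have s1 : |E - m * (k⁻¹ * q)| ≤ N * (|m| * (|m| + |k|)) := by
    have : k * E - m * q = k * (E - m * (k⁻¹ * q)) := by field_simp
    rw [this, abs_mul] at hS
    refine le_of_mul_le_mul_left (hS.trans (le_of_eq ?_)) hkp
    ring
  have s2 : |k⁻¹ * q - b| ≤ 2 * η := by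
    calc |k⁻¹ * q - b| = |(k⁻¹ * q - k⁻¹ * (f a (y + k) v - f a y v)) +
          (k⁻¹ * (f a (y + k) v - f a y v) - b)| := by congr 1; ring
      _ ≤ _ := abs_add_le _ _
      _ ≤ 2 * η := by linarith
  have s3 : |E - (t - a) * (v * b)| ≤ |m| * (4 * η) := by
    calc |E - (t - a) * (v * b)| = |(E - m * (k⁻¹ * q)) + m * (k⁻¹ * q - b)| := by
          congr 1; rw [hm]; ring
      _ ≤ |E - m * (k⁻¹ * q)| + |m * (k⁻¹ * q - b)| := abs_add_le _ _
      _ ≤ N * (|m| * (|m| + |k|)) + |m| * (2 * η) := by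
          rw [abs_mul m]; gcongr
      _ = |m| * (N * |m| + N * |k| + 2 * η) := by ring
      _ ≤ |m| * (4 * η) := by gcongr; linarith
  refine s3.trans ?_
  rw [hm, abs_mul]
  have : |v| * |t - a| * (4 * η) = (|v| / (|v| + 1)) * (ε * |t - a|) := by
    rw [hη]; field_simp
  rw [this]
  refine mul_le_of_le_one_left (by positivity) ?_
  rw [div_le_one hvp]; linarith

theorem step (h : Core f F C) {p q : ℝ} {N : ℕ}
    (hC : (C : ℝ≥0∞) * ENNReal.ofReal (q - p) ≤ 1 / 2)
    (hE : ∀ t ∈ (Om f F)ᶜ ∩ Ioo p q, nn f t ≤ N ∧ S2 f N t)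
    (hne : ((Om f F)ᶜ ∩ Ioo p q).Nonempty) : Ioo p q ⊆ Om f F := by
  have hcl : IsClosed (Om f F)ᶜ := isOpen_Om.isClosed_compl
  have hCs : ∀ c d, p ≤ c → d ≤ q → (C : ℝ≥0∞) * ENNReal.ofReal (d - c) ≤ 1 / 2 := by
    intro c d h1 h2
    refine le_trans ?_ hC
    gcongr
  obtain ⟨e, heE, heI⟩ := hne
  have hb : ∀ t ∈ Ioo p q, nn f t ≤ 2 * N := by
    intro t ht
    by_cases htO : t ∈ Om f F
    · rcases lt_or_ge e t with het | het
      · have hne : ((Om f F)ᶜ ∩ Icc e t).Nonempty := ⟨e, heE, le_rfl, het.le⟩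
        have hbd : BddAbove ((Om f F)ᶜ ∩ Icc e t) := ⟨t, fun x hx => hx.2.2⟩
        have ha := (hcl.inter isClosed_Icc).csSup_mem hne hbd
        set a := sSup ((Om f F)ᶜ ∩ Icc e t)
        have hat : a < t := lt_of_le_of_ne ha.2.2 (fun h => ha.1 (h ▸ htO))
        have haI : a ∈ Ioo p q := ⟨heI.1.trans_le ha.2.1, hat.trans ht.2⟩
        have hG := h.gap hat (hCs a t haI.1.le ht.2.le) (fun x hx => by
          by_contra hxO
          exact absurd (le_csSup hbd ⟨hxO, ha.2.1.trans hx.1.le, hx.2.le⟩) (not_le.2 hx.1))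
        refine (hG.half h (hCs a t haI.1.le ht.2.le) ⟨hat.le, le_rfl⟩ ⟨le_rfl, hat.le⟩).trans ?_
        gcongr
        exact (hE a ⟨ha.1, haI⟩).1
      · have hne : ((Om f F)ᶜ ∩ Icc t e).Nonempty := ⟨e, heE, het, le_rfl⟩
        have hbd : BddBelow ((Om f F)ᶜ ∩ Icc t e) := ⟨t, fun x hx => hx.2.1⟩
        have ha := (hcl.inter isClosed_Icc).csInf_mem hne hbd
        set a := sInf ((Om f F)ᶜ ∩ Icc t e)
        have hat : t < a := lt_of_le_of_ne ha.2.1 (fun h => ha.1 (h ▸ htO))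
        have haI : a ∈ Ioo p q := ⟨ht.1.trans hat, ha.2.2.trans_lt heI.2⟩
        have hG := h.gap hat (hCs t a ht.1.le haI.2.le) (fun x hx => by
          by_contra hxO
          exact absurd (csInf_le hbd ⟨hxO, hx.1.le, hx.2.le.trans ha.2.2⟩) (not_le.2 hx.2))
        refine (hG.half h (hCs t a ht.1.le haI.2.le) ⟨le_rfl, hat.le⟩ ⟨hat.le, le_rfl⟩).trans ?_
        gcongr
        exact (hE a ⟨ha.1, haI⟩).1
    · refine (hE t ⟨htO, ht⟩).1.trans ?_
      rw [two_mul]; exact le_self_add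
  have hNt : (2 * N : ℝ≥0∞) ≠ ⊤ := ENNReal.mul_ne_top (by simp) (by simp)
  have hD : ∀ s ∈ Ioo p q, ∀ t ∈ Ioo p q, s ≤ t → D f F s t := by
    intro s hs t ht hst
    have hI : Icc s t ⊆ Ioo p q := fun x hx => ⟨hs.1.trans_le hx.1, hx.2.trans_lt ht.2⟩
    set B : Set ℝ := insert s (insert t ((Om f F)ᶜ ∩ Icc s t)) with hB
    have hBcl : IsClosed B := by
      rw [hB, insert_eq, insert_eq]
      exact isClosed_singleton.union (isClosed_singleton.union (hcl.inter isClosed_Icc))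
    have hBI : B ⊆ Icc s t := by
      rintro x (rfl | rfl | hx)
      · exact ⟨le_rfl, hst⟩
      · exact ⟨hst, le_rfl⟩
      · exact hx.2
    set P : Set (ℝ × ℝ) := {c | c.1 ∈ B ∧ c.2 ∈ B ∧ c.1 < c.2 ∧ Ioo c.1 c.2 ∩ B = ∅} with hP
    have hPc : P.Countable := by
      refine Set.PairwiseDisjoint.countable_of_isOpen (s := fun c : ℝ × ℝ => Ioo c.1 c.2) ?_
        (fun c _ => isOpen_Ioo) (fun c hc => nonempty_Ioo.2 hc.2.2.1)
      rintro ⟨c, d⟩ ⟨h1, h2, h3, h4⟩ ⟨c', d'⟩ ⟨h1', h2', h3', h4'⟩ hne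
      simp only at *
      refine Set.disjoint_left.2 fun x hx hx' => hne ?_
      have n1 : ∀ y ∈ B, ¬ (c < y ∧ y < d) := fun y hy hh =>
        (Set.ext_iff.1 h4 y).1 ⟨hh, hy⟩
      have n2 : ∀ y ∈ B, ¬ (c' < y ∧ y < d') := fun y hy hh =>
        (Set.ext_iff.1 h4' y).1 ⟨hh, hy⟩
      have a1 := n1 c' h1'
      have a2 := n1 d' h2'
      have a3 := n2 c h1
      have a4 := n2 d h2
      simp only [mem_Ioo] at hx hx'
      have : c = c' := by
        rcases lt_trichotomy c c' with hh | hh | hh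
        · exact absurd ⟨hh, hx'.1.trans hx.2⟩ a1
        · exact hh
        · exact absurd ⟨hh, hx.1.trans hx'.2⟩ a3
      have : d = d' := by
        rcases lt_trichotomy d d' with hh | hh | hh
        · exact absurd ⟨hx'.1.trans hx.2, hh⟩ a4
        · exact hh
        · exact absurd ⟨hx.1.trans hx'.2, hh⟩ a2
      simp [*]
    have hgaps : ∀ᵐ z : ℝ × ℝ, ∀ c ∈ P, sh f c.2 z - sh f c.1 z = ∫ r in c.1..c.2, sh F r z := by
      rw [ae_ball_iff hPc]
      rintro ⟨c, d⟩ ⟨h1, h2, h3, h4⟩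
      simp only at *
      have hc := hBI h1
      have hd := hBI h2
      have hG := h.gap h3 (hCs c d (hI hc).1.le (hI hd).2.le) (fun x hx => by
        by_contra hxO
        have : x ∈ Ioo c d ∩ B := ⟨hx, Or.inr (Or.inr ⟨hxO, hc.1.trans hx.1.le, hx.2.le.trans hd.2⟩)⟩
        rw [h4] at this
        exact this)
      exact hG.2 c ⟨le_rfl, h3.le⟩ d ⟨h3.le, le_rfl⟩
    filter_upwards [hgaps, h.ae_int (Icc s t) (2 * N) measurableSet_Icc (by simp) hNt
      (fun r hr => hb r (hI hr))] with z hz hi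
    refine ftc_closed (g := fun t => sh f t z) (h := fun t => sh F t z) hst hBcl (by simp [hB]) (by simp [hB]) hBI hi
      (fun c hc d hd hcd hempty => hz (c, d) ⟨hc, hd, hcd, hempty⟩) ?_
    intro c hc
    rw [hB, hasDerivWithinAt_iff_hasFDerivWithinAt, hasFDerivWithinAt_insert,
      hasFDerivWithinAt_insert, ← hasDerivWithinAt_iff_hasFDerivWithinAt]
    by_cases hcO : c ∈ Om f F
    · have hnc : c ∉ closure ((Om f F)ᶜ ∩ Icc s t) := by
        rw [(hcl.inter isClosed_Icc).closure_eq]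
        exact fun hh => hh.1 hcO
      exact HasFDerivWithinAt.of_notMem_closure hnc
    · have hc' : c ∈ (Om f F)ᶜ ∩ Icc s t := ⟨hcO, hBI hc⟩
      exact h.der_within (N := N) (fun r (hr : r ∈ (Om f F)ᶜ ∩ Icc s t) =>
        (hE r ⟨hr.1, hI hr.2⟩).2) hc' z
  intro t ht
  obtain ⟨a, ha⟩ := nonempty_Ioo.2 ht.1
  obtain ⟨b, hb'⟩ := nonempty_Ioo.2 ht.2
  have hI : Icc a b ⊆ Ioo p q := fun x hx => ⟨ha.1.trans_le hx.1, hx.2.trans_lt hb'.2⟩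
  refine ⟨a, b, ha.2, hb'.1, ⟨2 * N, hNt, fun r hr => hb r (hI hr)⟩, fun r hr s hs => ?_⟩
  rcases le_total r s with hrs | hrs
  · exact hD r (hI hr) s (hI hs) hrs
  · exact D_symm (hD s (hI hs) r (hI hr) hrs)

theorem Om_univ (h : Core f F C) : Om f F = univ := by
  by_contra hne
  have hcl : IsClosed (Om f F)ᶜ := isOpen_Om.isClosed_compl
  have hne : ((Om f F)ᶜ).Nonempty := by rwa [nonempty_compl]
  have : Nonempty ↥(Om f F)ᶜ := hne.to_subtype
  have : CompleteSpace ↥(Om f F)ᶜ := hcl.completeSpace_coe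
  obtain ⟨N, x, hx⟩ := nonempty_interior_of_iUnion_of_closed (X := ↥(Om f F)ᶜ)
    (f := fun N : ℕ => Subtype.val ⁻¹' ({t | nn f t ≤ N} ∩ {t | S2 f N t}))
    (fun N => ((h.closed_n N).inter (h.closed_S2 N)).preimage continuous_subtype_val) (by
      ext ⟨t, ht⟩
      simp only [mem_iUnion, mem_preimage, mem_univ, iff_true]
      obtain ⟨N, hN⟩ := h.s2 t
      obtain ⟨M, hM⟩ := ENNReal.exists_nat_gt (h.fin t).ne
      refine ⟨max N M, ?_, ?_⟩
      · refine hM.le.trans ?_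
        exact_mod_cast le_max_right N M
      · intro y v a k
        refine (hN y v a k).trans ?_
        gcongr
        exact le_max_left N M)
  rw [mem_interior_iff_mem_nhds, mem_nhds_subtype] at hx
  obtain ⟨U, hU, hUs⟩ := hx
  obtain ⟨ε, hε, hball⟩ := Metric.mem_nhds_iff.1 hU
  set δ := min ε (1 / (4 * (C + 1))) with hδ
  have hδp : 0 < δ := lt_min hε (by positivity)
  have hmem : (x : ℝ) ∈ Ioo ((x : ℝ) - δ) (x + δ) := ⟨by linarith, by linarith⟩
  have := h.step (p := x - δ) (q := x + δ) (N := N) ?_ ?_ ⟨x, x.2, hmem⟩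
  · exact x.2 (this hmem)
  · have e : (C : ℝ≥0∞) * ENNReal.ofReal (x + δ - (x - δ)) = ENNReal.ofReal (C * (2 * δ)) := by
      rw [ENNReal.ofReal_mul (by positivity), ENNReal.ofReal_coe_nnreal]
      congr 2; ring
    have e2 : (1 / 2 : ℝ≥0∞) = ENNReal.ofReal (1 / 2) := by
      rw [ENNReal.ofReal_div_of_pos (by norm_num)]; simp
    rw [e, e2]
    apply ENNReal.ofReal_le_ofReal
    have h1 : δ ≤ 1 / (4 * (C + 1)) := min_le_right _ _
    have hC0 : (0 : ℝ) ≤ C := C.2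
    calc (C : ℝ) * (2 * δ) ≤ C * (2 * (1 / (4 * (C + 1)))) := by gcongr
      _ ≤ 1 / 2 := by
        rw [show (C : ℝ) * (2 * (1 / (4 * (C + 1)))) = (C / (C + 1)) * (1 / 2) by field_simp; norm_num]
        refine mul_le_of_le_one_left (by norm_num) ?_
        rw [div_le_one (by positivity)]; linarith
  · rintro t ⟨htE, htI⟩
    have : (⟨t, htE⟩ : ↥(Om f F)ᶜ) ∈ (Subtype.val ⁻¹' U : Set ↥(Om f F)ᶜ) := by
      refine hball ?_
      rw [Metric.mem_ball, Real.dist_eq, abs_lt]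
      have : δ ≤ ε := min_le_left _ _
      constructor <;> linarith [htI.1, htI.2]
    exact hUs this

theorem good_all (h : Core f F C) {a b : ℝ} (hab : a ≤ b) : Good f F a b :=
  h.good_of_subset hab (by rw [h.Om_univ]; exact subset_univ _)

end Core
end WB

namespace WB
open Set Filter Topology
open scoped ENNReal NNReal

theorem int_shear (t : ℝ) {φ : ℝ × ℝ → ℝ} (hφ : Measurable φ) :
    ∫ z : ℝ × ℝ, φ (z.1, z.2 + z.1 * t) = ∫ z, φ z := by
  have := integral_map (μ := volume) (mp_shear t).measurable.aemeasurable
    (f := φ) hφ.aestronglyMeasurable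
  rw [(mp_shear t).map_eq] at this
  exact this.symm

theorem enorm_fst_le_wt (z : ℝ × ℝ) : ‖z.1‖ₑ ≤ wt z := by
  unfold wt
  rw [← ofReal_norm]
  apply ENNReal.ofReal_le_ofReal
  rw [Real.norm_eq_abs]
  nlinarith [sq_nonneg (|z.1| - 1), sq_abs z.1]

theorem integrable_of_nrm {φ ψ : ℝ × ℝ → ℝ} (hφ : Measurable φ) (hψ : Measurable ψ)
    (hn : nrm φ < ⊤) (hb : ∀ z, ‖ψ z‖ₑ ≤ wt z) : Integrable fun z => ψ z * φ z := by
  refine ⟨(hψ.mul hφ).aestronglyMeasurable, lt_of_le_of_lt ?_ hn⟩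
  refine lintegral_mono fun z => ?_
  rw [enorm_mul]
  gcongr
  exact hb z

namespace Core
variable {f F : ℝ → ℝ → ℝ → ℝ} {C : ℝ≥0}

theorem int_vf (h : Core f F C) (t : ℝ) : Integrable fun z => z.1 * sh f t z :=
  integrable_of_nrm (h.meas_gt t) measurable_fst (by rw [h.nrm_g]; exact h.fin t) enorm_fst_le_wt

theorem mom_diff (h : Core f F C) {s t : ℝ} (hst : s ≤ t) :
    (∫ z : ℝ × ℝ, z.1 * sh f t z) - ∫ z : ℝ × ℝ, z.1 * sh f s z
      = ∫ r in s..t, ∫ z : ℝ × ℝ, z.1 * sh F r z := by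
  obtain ⟨⟨N, hNt, hN⟩, hD⟩ := h.good_all hst
  have hD := hD s ⟨le_rfl, hst⟩ t ⟨hst, le_rfl⟩
  rw [← integral_sub (h.int_vf t) (h.int_vf s)]
  have e1 : ∫ z : ℝ × ℝ, (z.1 * sh f t z - z.1 * sh f s z) =
      ∫ z : ℝ × ℝ, ∫ r in Ioc s t, z.1 * sh F r z := by
    refine integral_congr_ae ?_
    filter_upwards [hD] with z hz
    rw [← mul_sub, hz, intervalIntegral.integral_of_le hst, integral_const_mul]
  rw [e1, intervalIntegral.integral_of_le hst]
  refine integral_integral_swap (f := fun (z : ℝ × ℝ) r => z.1 * sh F r z) ?_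
  have hm : Measurable (Function.uncurry fun (z : ℝ × ℝ) r => z.1 * sh F r z) :=
    (measurable_fst.comp measurable_fst).mul (h.meas_H.comp measurable_swap)
  refine ⟨hm.aestronglyMeasurable, ?_⟩
  unfold HasFiniteIntegral
  rw [lintegral_prod _ hm.enorm.aemeasurable]
  have := h.fub (Ioc s t) N measurableSet_Ioc (fun r hr => hN r ⟨hr.1.le, hr.2⟩)
  refine lt_of_le_of_lt (le_trans ?_ this)
    (ENNReal.mul_lt_top (ENNReal.mul_lt_top (by simp) hNt.lt_top) (by simp))
  refine lintegral_mono fun z => ?_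
  simp only [Function.uncurry, enorm_mul]
  rw [lintegral_const_mul _ (h.meas_Hz z).enorm]
  gcongr
  exact enorm_fst_le_wt z

theorem cont_m (h : Core f F C) {W : ℝ → ℝ} (hW : Continuous W) {K : ℝ} (hK : ∀ x, |W x| ≤ K) :
    Continuous fun r => ∫ z : ℝ × ℝ, W (z.2 + z.1 * r) * sh f r z := by
  have hK0 : 0 ≤ K := (abs_nonneg _).trans (hK 0)
  have hIntg : ∀ r s, Integrable fun z : ℝ × ℝ => W (z.2 + z.1 * r) * sh f s z := by
    intro r s
    refine (h.integrable_g s).bdd_mul (c := K) ?_ (Eventually.of_forall fun z => hK _)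
    exact Continuous.aestronglyMeasurable (by fun_prop)
  rw [continuous_iff_continuousAt]
  intro r0
  have hB : Continuous fun r => ∫ z : ℝ × ℝ, W (z.2 + z.1 * r) * sh f r0 z := by
    refine continuous_of_dominated (bound := fun z => K * ‖sh f r0 z‖) ?_ ?_ ?_ ?_
    · exact fun r => (hIntg r r0).aestronglyMeasurable
    · intro r
      refine Eventually.of_forall fun z => ?_
      rw [norm_mul]
      gcongr
      exact hK _
    · exact (h.integrable_g r0).norm.const_mul K
    · refine Eventually.of_forall fun z => ?_
      fun_prop
  obtain ⟨⟨N, hNt, hN⟩, hD⟩ := h.good_all (a := r0 - 1) (b := r0 + 1) (by linarith)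
  have hA : Tendsto (fun r => ∫ z : ℝ × ℝ, W (z.2 + z.1 * r) * (sh f r z - sh f r0 z)) (𝓝 r0)
      (𝓝 0) := by
    have hlim : Tendsto (fun r => K * (C * N.toReal * |r - r0|)) (𝓝 r0) (𝓝 0) := by
      have : Continuous fun r => K * (C * N.toReal * |r - r0|) := by fun_prop
      simpa using this.tendsto r0
    refine squeeze_zero_norm' ?_ hlim
    have hnb : Icc (r0 - 1) (r0 + 1) ∈ 𝓝 r0 := Icc_mem_nhds (by linarith) (by linarith)
    filter_upwards [hnb] with r hr
    have h0 : r0 ∈ Icc (r0 - 1) (r0 + 1) := ⟨by linarith, by linarith⟩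
    have h1 := h.D_norm (hD r0 h0 r hr) (fun q hq => hN q (uIcc_subset_Icc h0 hr hq))
    have h2 : ∫⁻ z, ‖sh f r z - sh f r0 z‖ₑ ≤ C * N * ENNReal.ofReal |r - r0| := by
      refine le_trans (lintegral_mono fun z => ?_) h1
      exact le_mul_of_one_le_left (by simp) (one_le_wt z)
    have hsub := (h.integrable_g r).sub (h.integrable_g r0)
    calc ‖∫ z : ℝ × ℝ, W (z.2 + z.1 * r) * (sh f r z - sh f r0 z)‖
        ≤ ∫ z, K * ‖sh f r z - sh f r0 z‖ := by
          refine norm_integral_le_of_norm_le (hsub.norm.const_mul K) (Eventually.of_forall fun z => ?_)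
          rw [norm_mul]
          gcongr
          exact hK _
      _ = K * (∫⁻ z, ‖sh f r z - sh f r0 z‖ₑ).toReal := by
          rw [integral_const_mul]
          congr 1
          exact integral_norm_eq_lintegral_enorm hsub.aestronglyMeasurable
      _ ≤ _ := by
          gcongr
          refine (ENNReal.toReal_mono ?_ h2).trans (le_of_eq ?_)
          · exact ENNReal.mul_ne_top (ENNReal.mul_ne_top (by simp) hNt) (by simp)
          · simp
  have := hA.add (hB.tendsto r0)
  rw [zero_add] at this
  refine this.congr fun r => ?_
  have hAi : Integrable fun z : ℝ × ℝ => W (z.2 + z.1 * r) * (sh f r z - sh f r0 z) := by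
    simp_rw [mul_sub]
    exact (hIntg r r).sub (hIntg r r0)
  rw [← integral_add hAi (hIntg r r0)]
  congr 1
  ext z
  ring

theorem momentum (h : Core f F C) {W : ℝ → ℝ} (hW : Continuous W) {K : ℝ} (hK : ∀ x, |W x| ≤ K)
    (hm : ∀ t, ∫ z : ℝ × ℝ, z.1 * fz F t z = -∫ z : ℝ × ℝ, W z.2 * fz f t z) (t : ℝ) :
    HasDerivAt (fun s => ∫ z : ℝ × ℝ, z.1 * fz f s z) (-∫ z : ℝ × ℝ, W z.2 * fz f t z) t := by
  have e1 : ∀ s, ∫ z : ℝ × ℝ, z.1 * fz f s z = ∫ z : ℝ × ℝ, z.1 * sh f s z := fun s =>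
    (int_shear s (φ := fun z => z.1 * fz f s z)
      (measurable_fst.mul (h.cont_z s).measurable)).symm
  have e2 : ∀ s, ∫ z : ℝ × ℝ, z.1 * fz F s z = ∫ z : ℝ × ℝ, z.1 * sh F s z := fun s =>
    (int_shear s (φ := fun z => z.1 * fz F s z)
      (measurable_fst.mul (h.meas_F.comp (measurable_prodMk_left (x := s))))).symm
  have e3 : ∀ s, ∫ z : ℝ × ℝ, W z.2 * fz f s z = ∫ z : ℝ × ℝ, W (z.2 + z.1 * s) * sh f s z :=
    fun s => (int_shear s (φ := fun z => W z.2 * fz f s z)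
      ((hW.measurable.comp measurable_snd).mul (h.cont_z s).measurable)).symm
  have hc : Continuous fun r => -∫ z : ℝ × ℝ, W (z.2 + z.1 * r) * sh f r z :=
    (h.cont_m hW hK).neg
  simp_rw [e1, e3]
  have key : ∀ s r, s ≤ r → (∫ z : ℝ × ℝ, z.1 * sh f r z) - ∫ z : ℝ × ℝ, z.1 * sh f s z
      = ∫ q in s..r, -∫ z : ℝ × ℝ, W (z.2 + z.1 * q) * sh f q z := by
    intro s r hsr
    rw [h.mom_diff hsr]
    simp_rw [← e2, hm, e3]
  have hd := intervalIntegral.integral_hasDerivAt_right (a := t) (b := t)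
    (hc.intervalIntegrable t t) (hc.stronglyMeasurableAtFilter _ _) hc.continuousAt
  have := hd.add_const (∫ z : ℝ × ℝ, z.1 * sh f t z)
  refine this.congr_of_eventuallyEq (Eventually.of_forall fun s => ?_)
  simp only
  rcases le_total t s with hts | hts
  · rw [← key t s hts]; ring
  · rw [intervalIntegral.integral_symm, ← key s t hts]; ring

end Core
end WB

namespace WB
open Set Filter Topology
open scoped ENNReal NNReal FourierTransform

noncomputable def Vc (V : SchwartzMap ℝ ℝ) : SchwartzMap ℝ ℂ :=
  SchwartzMap.postcompCLM (𝕜 := ℝ) Complex.ofRealCLM V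

theorem Vc_apply (V : SchwartzMap ℝ ℝ) (x : ℝ) : Vc V x = (V x : ℂ) := rfl

noncomputable def Vh (V : SchwartzMap ℝ ℝ) : SchwartzMap ℝ ℂ := 𝓕 (Vc V)

theorem Vh_eq (V : SchwartzMap ℝ ℝ) (ξ : ℝ) :
    Vh V ξ = ∫ z : ℝ, (V z : ℂ) * cexp (↑(-2 * Real.pi * z * ξ) * I) := by
  show (𝓕 (Vc V) : SchwartzMap ℝ ℂ) ξ = _
  rw [SchwartzMap.fourier_coe, Real.fourier_real_eq_integral_exp_smul]
  congr 1
  ext z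
  rw [smul_eq_mul, Vc_apply, mul_comm]

noncomputable def EE (V : SchwartzMap ℝ ℝ) (x ξ : ℝ) : ℂ :=
  cexp (↑(2 * Real.pi * x * ξ) * I) * Vh V ξ

theorem norm_cexp_I (r : ℝ) : ‖cexp (r * I)‖ = 1 := Complex.norm_exp_ofReal_mul_I r

theorem norm_EE (V : SchwartzMap ℝ ℝ) (x ξ : ℝ) : ‖EE V x ξ‖ = ‖Vh V ξ‖ := by
  rw [EE, norm_mul, norm_cexp_I, one_mul]

theorem cont_EE (V : SchwartzMap ℝ ℝ) : Continuous fun p : ℝ × ℝ => EE V p.1 p.2 := by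
  have := (Vh V).continuous
  unfold EE
  fun_prop

noncomputable def kap (ℏ : ℝ) (V : SchwartzMap ℝ ℝ) (x p : ℝ) : ℂ :=
  (-I) / (2 * Real.pi * ℏ ^ 2) *
    ∫ y : ℝ, ((V (x + y / 2) - V (x - y / 2) : ℝ) : ℂ) * cexp (I * y * p / ℏ)

theorem int_V_plus (V : SchwartzMap ℝ ℝ) (x : ℝ) : Integrable fun y : ℝ => V (x + y / 2) :=
  (V.integrable.comp_add_left x).comp_div (by norm_num)

theorem int_V_minus (V : SchwartzMap ℝ ℝ) (x : ℝ) : Integrable fun y : ℝ => V (x - y / 2) :=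
  (V.integrable.comp_sub_left x).comp_div (by norm_num)

theorem kap_eq {ℏ : ℝ} (hℏ : 0 < ℏ) (V : SchwartzMap ℝ ℝ) (x p : ℝ) :
    kap ℏ V x p = (-I) / (Real.pi * ℏ ^ 2) *
      (EE V x (-p / (Real.pi * ℏ)) - EE V x (p / (Real.pi * ℏ))) := by
  have hπ := Real.pi_pos
  have e0 : ∀ y : ℝ, cexp (I * y * p / ℏ) = cexp (↑(y * p / ℏ) * I) := by
    intro y; congr 1; push_cast; ring
  have e1 : ∫ y : ℝ, (V (x + y / 2) : ℂ) * cexp (↑(y * p / ℏ) * I) =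
      2 * EE V x (-p / (Real.pi * ℏ)) := by
    set Φ : ℝ → ℂ := fun z => (V z : ℂ) * cexp (↑(2 * (z - x) * p / ℏ) * I) with hΦ
    have h1 : ∀ y : ℝ, (V (x + y / 2) : ℂ) * cexp (↑(y * p / ℏ) * I) = Φ (x + y / 2) := by
      intro y; simp only [hΦ]; congr 4; ring
    simp_rw [h1]
    rw [Measure.integral_comp_div (fun y => Φ (x + y)) 2, integral_add_left_eq_self Φ x]
    rw [EE, Vh_eq, ← integral_const_mul]
    simp only [abs_two]
    rw [Complex.real_smul]
    push_cast
    congr 2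
    ext z
    simp only [hΦ]
    rw [mul_left_comm, ← Complex.exp_add]
    congr 2
    push_cast
    have : (Real.pi : ℂ) ≠ 0 := by exact_mod_cast hπ.ne'
    have : (ℏ : ℂ) ≠ 0 := by exact_mod_cast hℏ.ne'
    field_simp
    ring
  have e2 : ∫ y : ℝ, (V (x - y / 2) : ℂ) * cexp (↑(y * p / ℏ) * I) =
      2 * EE V x (p / (Real.pi * ℏ)) := by
    set Φ : ℝ → ℂ := fun z => (V z : ℂ) * cexp (↑(2 * (x - z) * p / ℏ) * I) with hΦ
    have h1 : ∀ y : ℝ, (V (x - y / 2) : ℂ) * cexp (↑(y * p / ℏ) * I) = Φ (x - y / 2) := by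
      intro y; simp only [hΦ]; congr 4; ring
    simp_rw [h1]
    rw [Measure.integral_comp_div (fun y => Φ (x - y)) 2, integral_sub_left_eq_self Φ volume x]
    rw [EE, Vh_eq, ← integral_const_mul]
    simp only [abs_two]
    rw [Complex.real_smul]
    push_cast
    congr 2
    ext z
    simp only [hΦ]
    rw [mul_left_comm, ← Complex.exp_add]
    congr 2
    push_cast
    have : (Real.pi : ℂ) ≠ 0 := by exact_mod_cast hπ.ne'
    have : (ℏ : ℂ) ≠ 0 := by exact_mod_cast hℏ.ne'
    field_simp
    ring
  have hi : ∀ g : ℝ → ℝ, Integrable g →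
      Integrable fun y : ℝ => (g y : ℂ) * cexp (↑(y * p / ℏ) * I) := by
    intro g hg
    refine Integrable.mul_bdd (c := 1) hg.ofReal ?_ (Eventually.of_forall fun y => (norm_cexp_I _).le)
    exact Continuous.aestronglyMeasurable (by fun_prop)
  unfold kap
  simp_rw [e0]
  push_cast
  simp_rw [sub_mul]
  rw [integral_sub]
  · push_cast at e1 e2
    rw [e1, e2]
    have : (Real.pi : ℂ) ≠ 0 := by exact_mod_cast hπ.ne'
    have : (ℏ : ℂ) ≠ 0 := by exact_mod_cast hℏ.ne'
    field_simp
  · simpa using hi _ (int_V_plus V x)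
  · simpa using hi _ (int_V_minus V x)

theorem int_wt_schwartz (g : SchwartzMap ℝ ℂ) : Integrable fun ξ : ℝ => (1 + ξ ^ 2) * ‖g ξ‖ := by
  have h0 := g.integrable.norm (μ := volume)
  have h2 := g.integrable_pow_mul volume 2
  refine (h0.add h2).congr (Eventually.of_forall fun ξ => ?_)
  simp only [Pi.add_apply, Real.norm_eq_abs, sq_abs]
  ring

/-- `x`-independent envelope of the kernel -/
noncomputable def AA (ℏ : ℝ) (V : SchwartzMap ℝ ℝ) (p : ℝ) : ℝ :=
  1 / (Real.pi * ℏ ^ 2) * (‖Vh V (-p / (Real.pi * ℏ))‖ + ‖Vh V (p / (Real.pi * ℏ))‖)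

theorem cont_AA (ℏ : ℝ) (V : SchwartzMap ℝ ℝ) : Continuous (AA ℏ V) := by
  have := (Vh V).continuous
  unfold AA
  fun_prop

theorem AA_nonneg (ℏ : ℝ) (V : SchwartzMap ℝ ℝ) (p : ℝ) : 0 ≤ AA ℏ V p := by
  have := Real.pi_pos
  unfold AA; positivity

theorem cont_kap {ℏ : ℝ} (hℏ : 0 < ℏ) (V : SchwartzMap ℝ ℝ) :
    Continuous fun p : ℝ × ℝ => kap ℏ V p.1 p.2 := by
  simp_rw [kap_eq hℏ V]
  have h := cont_EE V
  have h1 : Continuous fun p : ℝ × ℝ => EE V p.1 (-p.2 / (Real.pi * ℏ)) :=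
    h.comp (f := fun p : ℝ × ℝ => (p.1, -p.2 / (Real.pi * ℏ))) (by fun_prop)
  have h2 : Continuous fun p : ℝ × ℝ => EE V p.1 (p.2 / (Real.pi * ℏ)) :=
    h.comp (f := fun p : ℝ × ℝ => (p.1, p.2 / (Real.pi * ℏ))) (by fun_prop)
  fun_prop

theorem norm_kap_le {ℏ : ℝ} (hℏ : 0 < ℏ) (V : SchwartzMap ℝ ℝ) (x p : ℝ) :
    ‖kap ℏ V x p‖ ≤ AA ℏ V p := by
  have hπ := Real.pi_pos
  rw [kap_eq hℏ, norm_mul, AA]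
  have : ‖(-I) / (Real.pi * ℏ ^ 2 : ℂ)‖ = 1 / (Real.pi * ℏ ^ 2) := by
    rw [norm_div, norm_neg, norm_I, norm_mul, norm_pow, Complex.norm_real, Complex.norm_real,
      Real.norm_of_nonneg hπ.le, Real.norm_of_nonneg hℏ.le]
  rw [this]
  refine mul_le_mul_of_nonneg_left ?_ (by positivity)
  refine (norm_sub_le _ _).trans ?_
  rw [norm_EE, norm_EE]

theorem int_AA {ℏ : ℝ} (hℏ : 0 < ℏ) (V : SchwartzMap ℝ ℝ) :
    Integrable fun p : ℝ => (1 + p ^ 2) * AA ℏ V p := by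
  have hπ := Real.pi_pos
  set b := Real.pi * ℏ with hb
  have hb0 : 0 < b := by positivity
  have h := int_wt_schwartz (Vh V)
  have h1 := h.comp_div (R := b) hb0.ne'
  have h2 := h1.comp_neg
  have h3 := ((h1.add h2).const_mul ((1 + b ^ 2) * (1 / (Real.pi * ℏ ^ 2))))
  refine h3.mono' ?_ (Eventually.of_forall fun p => ?_)
  · have := cont_AA ℏ V
    exact Continuous.aestronglyMeasurable (by fun_prop)
  · have h0 : 1 + p ^ 2 ≤ (1 + b ^ 2) * (1 + (p / b) ^ 2) := by
      have : p = b * (p / b) := by field_simp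
      set q := p / b
      rw [this]
      nlinarith [sq_nonneg b, sq_nonneg q]
    rw [Real.norm_of_nonneg (mul_nonneg (by positivity) (AA_nonneg _ _ _)), AA]
    simp only [Pi.add_apply, ← hb]
    rw [show (-p / b) ^ 2 = (p / b) ^ 2 by ring]
    calc _ ≤ ((1 + b ^ 2) * (1 + (p / b) ^ 2)) * (1 / (Real.pi * ℏ ^ 2) *
        (‖Vh V (-p / b)‖ + ‖Vh V (p / b)‖)) := by gcongr
      _ = _ := by ring

theorem int_kap {ℏ : ℝ} (hℏ : 0 < ℏ) (V : SchwartzMap ℝ ℝ) (x : ℝ) : Integrable (kap ℏ V x) := by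
  refine (int_AA hℏ V).mono' ?_ (Eventually.of_forall fun p => (norm_kap_le hℏ V x p).trans ?_)
  · exact ((cont_kap hℏ V).comp (f := fun p => (x, p)) (by fun_prop)).aestronglyMeasurable
  · nlinarith [AA_nonneg ℏ V p, mul_nonneg (sq_nonneg p) (AA_nonneg ℏ V p)]

theorem int_p_kap {ℏ : ℝ} (hℏ : 0 < ℏ) (V : SchwartzMap ℝ ℝ) (x : ℝ) :
    Integrable fun p : ℝ => (p : ℂ) * kap ℏ V x p := by
  have hc := (cont_kap hℏ V).comp (f := fun p : ℝ => (x, p)) (by fun_prop)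
  refine (int_AA hℏ V).mono' ?_ (Eventually.of_forall fun p => ?_)
  · exact Continuous.aestronglyMeasurable (Complex.continuous_ofReal.mul hc)
  · rw [norm_mul, Complex.norm_real, Real.norm_eq_abs]
    gcongr
    · nlinarith [sq_nonneg (|p| - 1), sq_abs p]
    · exact norm_kap_le hℏ V x p

theorem kap_odd {ℏ : ℝ} (hℏ : 0 < ℏ) (V : SchwartzMap ℝ ℝ) (x p : ℝ) :
    kap ℏ V x (-p) = - kap ℏ V x p := by
  rw [kap_eq hℏ, kap_eq hℏ, neg_neg]; ring

theorem integral_kap {ℏ : ℝ} (hℏ : 0 < ℏ) (V : SchwartzMap ℝ ℝ) (x : ℝ) :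
    ∫ p, kap ℏ V x p = 0 := by
  have h := integral_neg_eq_self (kap ℏ V x) volume
  simp_rw [kap_odd hℏ] at h
  rw [integral_neg] at h
  exact self_eq_neg.1 h.symm

theorem deriv_V (V : SchwartzMap ℝ ℝ) (x : ℝ) :
    ((deriv V x : ℝ) : ℂ) = ∫ ξ : ℝ, (2 * Real.pi * I * ξ) * EE V x ξ := by
  have hd : ∀ y, HasDerivAt (fun z => (Vc V) z) ((deriv V y : ℝ) : ℂ) y := fun y =>
    (V.differentiableAt.hasDerivAt (x := y)).ofReal_comp
  have h1 : (SchwartzMap.derivCLM ℂ ℂ (Vc V)) x = ((deriv V x : ℝ) : ℂ) := by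
    rw [SchwartzMap.derivCLM_apply]
    exact (hd x).deriv
  have h2 : (𝓕⁻ (𝓕 (SchwartzMap.derivCLM ℂ ℂ (Vc V)))) = SchwartzMap.derivCLM ℂ ℂ (Vc V) :=
    FourierTransform.fourierInv_fourier_eq _
  rw [← h1, ← h2, SchwartzMap.fourierInv_coe, Real.fourierInv_eq']
  congr 1
  ext ξ
  have h3 : (𝓕 (SchwartzMap.derivCLM ℂ ℂ (Vc V)) : SchwartzMap ℝ ℂ) ξ =
      (2 * Real.pi * I * ξ) * Vh V ξ := by
    rw [SchwartzMap.fourier_coe]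
    have : ⇑(SchwartzMap.derivCLM ℂ ℂ (Vc V)) = deriv (Vc V) := by
      ext y; rw [SchwartzMap.derivCLM_apply]
    rw [this, Real.fourier_deriv (Vc V).integrable (Vc V).differentiable]
    · rfl
    · rw [← this]; exact SchwartzMap.integrable _
  rw [h3, EE, smul_eq_mul]
  simp only [RCLike.inner_apply, conj_trivial]
  rw [show 2 * Real.pi * (x * ξ) = 2 * Real.pi * x * ξ by ring]
  ring

theorem integral_p_kap {ℏ : ℝ} (hℏ : 0 < ℏ) (V : SchwartzMap ℝ ℝ) (x : ℝ) :
    ∫ p : ℝ, (p : ℂ) * kap ℏ V x p = ((deriv V x : ℝ) : ℂ) := by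
  have hπ := Real.pi_pos
  set b := Real.pi * ℏ with hb
  have hb0 : 0 < b := by positivity
  have hbC : (b : ℂ) ≠ 0 := by exact_mod_cast hb0.ne'
  have hπC : (Real.pi : ℂ) ≠ 0 := by exact_mod_cast hπ.ne'
  have hhC : (ℏ : ℂ) ≠ 0 := by exact_mod_cast hℏ.ne'
  set G : ℝ → ℂ := fun ξ => (ξ : ℂ) * EE V x ξ with hG
  have hGi : Integrable G := by
    refine (int_wt_schwartz (Vh V)).mono' ?_ (Eventually.of_forall fun p => ?_)
    · have := (cont_EE V).comp (f := fun p : ℝ => (x, p)) (by fun_prop)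
      exact Continuous.aestronglyMeasurable (Complex.continuous_ofReal.mul this)
    · rw [norm_mul, Complex.norm_real, Real.norm_eq_abs, norm_EE]
      gcongr
      nlinarith [sq_nonneg (|p| - 1), sq_abs p]
  have h1 := hGi.comp_div (R := b) hb0.ne'
  have h2 := h1.comp_neg
  have e : ∀ p : ℝ, (p : ℂ) * kap ℏ V x p =
      (I / (Real.pi * ℏ ^ 2) * b) * (G (-p / b) + G (p / b)) := by
    intro p
    rw [kap_eq hℏ, ← hb]
    simp only [hG]
    push_cast
    field_simp
    ring
  simp_rw [e]
  rw [integral_const_mul, integral_add h2 h1, integral_neg_eq_self (fun p => G (p / b)) volume,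
    Measure.integral_comp_div G b, deriv_V, abs_of_pos hb0, Complex.real_smul]
  have : ∀ ξ : ℝ, (2 * Real.pi * I * ξ : ℂ) * EE V x ξ = (2 * Real.pi * I) * G ξ := by
    intro ξ; simp only [hG]; ring
  simp_rw [this]
  rw [integral_const_mul, hb]
  push_cast
  field_simp
  ring

theorem theta_eq {ℏ : ℝ} (V : SchwartzMap ℝ ℝ) {φ : ℝ → ℝ} (hφ : Integrable φ) (x v : ℝ) :
    wignerTheta ℏ (⇑V) (fun w => ((φ w : ℝ) : ℂ)) x v = ∫ w, (φ w : ℂ) * kap ℏ V x (v - w) := by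
  unfold wignerTheta kap
  have hδ : Integrable fun y : ℝ => V (x + y / 2) - V (x - y / 2) :=
    (int_V_plus V x).sub (int_V_minus V x)
  have e0 : ∀ y w : ℝ, cexp (I * y * v / ℏ) * cexp (-I * y * w / ℏ) = cexp (↑(y * (v - w) / ℏ) * I) := by
    intro y w; rw [← Complex.exp_add]; congr 1; push_cast; ring
  have e1 : ∀ y w : ℝ, cexp (I * y * ↑(v - w) / ℏ) = cexp (↑(y * (v - w) / ℏ) * I) := by
    intro y w; congr 1; push_cast; ring
  simp_rw [e1, mul_left_comm _ ((-I) / (2 * Real.pi * ℏ ^ 2 : ℂ)), integral_const_mul]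
  congr 1
  simp_rw [← integral_const_mul]
  have e2 : ∀ y w : ℝ, ((V (x + y / 2) - V (x - y / 2) : ℝ) : ℂ) * cexp (I * y * v / ℏ) *
      ((φ w : ℂ) * cexp (-I * y * w / ℏ)) =
      (φ w : ℂ) * (((V (x + y / 2) - V (x - y / 2) : ℝ) : ℂ) * cexp (↑(y * (v - w) / ℏ) * I)) := by
    intro y w; rw [← e0]; ring
  simp_rw [e2]
  refine integral_integral_swap ?_
  have hp := (hδ.mul_prod hφ).ofReal (𝕜 := ℂ)
  have hp2 := Integrable.mul_bdd (c := 1) hp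
    (g := fun z : ℝ × ℝ => cexp (↑(z.1 * (v - z.2) / ℏ) * I))
    (Continuous.aestronglyMeasurable (by fun_prop)) (Eventually.of_forall fun y => (norm_cexp_I _).le)
  refine hp2.congr (Eventually.of_forall fun z => ?_)
  simp only [Function.uncurry]
  push_cast
  simp
  ring

end WB

namespace WB
open Set Filter Topology
open scoped ENNReal NNReal

noncomputable def w1 (v : ℝ) : ℝ≥0∞ := ENNReal.ofReal (1 + v ^ 2)

theorem measurable_w1 : Measurable w1 := by unfold w1; fun_prop

theorem w1_le (v w : ℝ) : w1 v ≤ 2 * w1 w * w1 (v - w) := by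
  unfold w1
  rw [show (2 : ℝ≥0∞) = ENNReal.ofReal 2 by simp, ← ENNReal.ofReal_mul (by norm_num),
    ← ENNReal.ofReal_mul (by positivity)]
  apply ENNReal.ofReal_le_ofReal
  nlinarith [sq_nonneg (v - w - w), sq_nonneg (w * (v - w)), sq_nonneg (v - w), sq_nonneg w]

theorem int_low {φ : ℝ → ℝ} (hc : Continuous φ) (h2 : Integrable fun w => (1 + w ^ 2) * φ w)
    {g : ℝ → ℝ} (hg : Continuous g) {K : ℝ} (hb : ∀ w, |g w| ≤ K * (1 + w ^ 2)) :
    Integrable fun w => g w * φ w := by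
  refine (h2.norm.const_mul K).mono' ?_ (Eventually.of_forall fun w => ?_)
  · exact Continuous.aestronglyMeasurable (by fun_prop)
  · rw [norm_mul, norm_mul, Real.norm_of_nonneg (show 0 ≤ 1 + w ^ 2 by positivity), ← mul_assoc]
    gcongr
    exact hb w

theorem abs_le_wt (p : ℝ) : |p| ≤ 1 * (1 + p ^ 2) := by
  nlinarith [sq_nonneg (|p| - 1), sq_abs p]

theorem theta_lint {ℏ : ℝ} (hℏ : 0 < ℏ) (V : SchwartzMap ℝ ℝ) {φ : ℝ → ℝ} (hc : Continuous φ)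
    (h2 : Integrable fun w => (1 + w ^ 2) * φ w) (x : ℝ) :
    ∫⁻ v, w1 v * ‖wignerTheta ℏ (⇑V) (fun w => ((φ w : ℝ) : ℂ)) x v‖ₑ ≤
      2 * ENNReal.ofReal (∫ p, (1 + p ^ 2) * AA ℏ V p) * ∫⁻ w, w1 w * ‖φ w‖ₑ := by
  have hφ : Integrable φ := by
    simpa using int_low hc h2 (g := fun _ => 1) continuous_const (K := 1)
      (fun w => by simp; positivity)
  have hA := (cont_AA ℏ V).measurable
  have e1 : ∀ v, w1 v * ‖wignerTheta ℏ (⇑V) (fun w => ((φ w : ℝ) : ℂ)) x v‖ₑ ≤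
      ∫⁻ w, (2 * (w1 w * ‖φ w‖ₑ)) * (w1 (v - w) * ENNReal.ofReal (AA ℏ V (v - w))) := by
    intro v
    rw [theta_eq V hφ]
    calc w1 v * ‖∫ w, (φ w : ℂ) * kap ℏ V x (v - w)‖ₑ
        ≤ w1 v * ∫⁻ w, ‖(φ w : ℂ) * kap ℏ V x (v - w)‖ₑ := by
          gcongr; exact enorm_integral_le_lintegral_enorm _
      _ ≤ w1 v * ∫⁻ w, ‖φ w‖ₑ * ENNReal.ofReal (AA ℏ V (v - w)) := by
          gcongr with w
          rw [enorm_mul]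
          gcongr
          · rw [← ofReal_norm, ← ofReal_norm, Complex.norm_real]
          · rw [← ofReal_norm]
            exact ENNReal.ofReal_le_ofReal (norm_kap_le hℏ V x _)
      _ = ∫⁻ w, w1 v * (‖φ w‖ₑ * ENNReal.ofReal (AA ℏ V (v - w))) := by
          rw [lintegral_const_mul]
          have := hc.measurable
          fun_prop
      _ ≤ _ := by
          refine lintegral_mono fun w => ?_
          calc _ ≤ (2 * w1 w * w1 (v - w)) * (‖φ w‖ₑ * ENNReal.ofReal (AA ℏ V (v - w))) := by
                gcongr; exact w1_le v w
            _ = _ := by ring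
  have hm := measurable_w1
  have hcm := hc.measurable
  calc _ ≤ ∫⁻ v, ∫⁻ w, (2 * (w1 w * ‖φ w‖ₑ)) * (w1 (v - w) * ENNReal.ofReal (AA ℏ V (v - w))) :=
        lintegral_mono e1
    _ = ∫⁻ w, ∫⁻ v, (2 * (w1 w * ‖φ w‖ₑ)) * (w1 (v - w) * ENNReal.ofReal (AA ℏ V (v - w))) := by
        refine lintegral_lintegral_swap (Measurable.aemeasurable ?_)
        simp only [Function.uncurry_def]
        fun_prop
    _ = ∫⁻ w, (2 * (w1 w * ‖φ w‖ₑ)) * ENNReal.ofReal (∫ p, (1 + p ^ 2) * AA ℏ V p) := by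
        congr 1
        ext w
        rw [lintegral_const_mul _ (by fun_prop)]
        congr 1
        rw [lintegral_sub_right_eq_self (fun p => w1 p * ENNReal.ofReal (AA ℏ V p)) w,
          ofReal_integral_eq_lintegral_ofReal (int_AA hℏ V)
            (Eventually.of_forall fun p => mul_nonneg (by positivity) (AA_nonneg _ _ _))]
        congr 1
        ext p
        rw [ENNReal.ofReal_mul (by positivity)]
        rfl
    _ = _ := by
        rw [lintegral_mul_const _ (by fun_prop), lintegral_const_mul _ (by fun_prop)]
        ring

theorem theta_mom {ℏ : ℝ} (hℏ : 0 < ℏ) (V : SchwartzMap ℝ ℝ) {φ : ℝ → ℝ} (hc : Continuous φ)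
    (h2 : Integrable fun w => (1 + w ^ 2) * φ w) (x : ℝ) :
    (Integrable fun v : ℝ => (v : ℂ) * wignerTheta ℏ (⇑V) (fun w => ((φ w : ℝ) : ℂ)) x v) ∧
    ∫ v : ℝ, (v : ℂ) * wignerTheta ℏ (⇑V) (fun w => ((φ w : ℝ) : ℂ)) x v =
      (((∫ w, φ w) * deriv V x : ℝ) : ℂ) := by
  have hφ : Integrable φ := by
    simpa using int_low hc h2 (g := fun _ => 1) continuous_const (K := 1)
      (fun w => by simp; positivity)
  have hφ1 : Integrable fun w => w * φ w :=
    int_low hc h2 (g := fun w => w) continuous_id (K := 1) abs_le_wt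
  have hφC : Integrable fun w => (φ w : ℂ) := hφ.ofReal
  have hφ1C : Integrable fun w : ℝ => ((w * φ w : ℝ) : ℂ) := hφ1.ofReal
  set L := ContinuousLinearMap.mul ℝ ℂ
  have hk := int_kap hℏ V x
  have hpk := int_p_kap hℏ V x
  have hae : (fun v : ℝ => (v : ℂ) * wignerTheta ℏ (⇑V) (fun w => ((φ w : ℝ) : ℂ)) x v) =ᵐ[volume]
      fun v => convolution (fun w : ℝ => ((w * φ w : ℝ) : ℂ)) (kap ℏ V x) L volume v +
        convolution (fun w => (φ w : ℂ)) (fun p : ℝ => (p : ℂ) * kap ℏ V x p) L volume v := by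
    filter_upwards [hφ1C.ae_convolution_exists L hk, hφC.ae_convolution_exists L hpk] with v h1 h3
    unfold convolution
    rw [theta_eq V hφ, ← integral_const_mul, ← integral_add h1 h3]
    congr 1
    ext w
    simp only [L, ContinuousLinearMap.mul_apply']
    push_cast
    ring
  have i1 := hφ1C.integrable_convolution L hk
  have i2 := hφC.integrable_convolution L hpk
  refine ⟨(i1.add i2).congr hae.symm, ?_⟩
  rw [integral_congr_ae hae, integral_add i1 i2, integral_convolution L hφ1C hk,
    integral_convolution L hφC hpk, integral_kap hℏ, integral_p_kap hℏ]
  simp only [L, ContinuousLinearMap.mul_apply', mul_zero, zero_add]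
  rw [integral_complex_ofReal]
  push_cast
  rfl

open ProbabilityTheory in
theorem gauss_moments (u : ℝ) {T : ℝ} (hT : 0 < T) (G : ℝ → ℝ)
    (hG : ∀ v, G v = (Real.sqrt (2 * Real.pi * T))⁻¹ * Real.exp (-(v - u) ^ 2 / (2 * T))) :
    (∀ v, 0 ≤ G v) ∧ Continuous G ∧ Integrable (fun v => (1 + v ^ 2) * G v) ∧
      (∫ v, (1 + v ^ 2) * G v = 1 + u ^ 2 + T) ∧ ∫ v, v * G v = u := by
  obtain ⟨T, rfl⟩ : ∃ S : ℝ≥0, T = S := ⟨⟨T, hT.le⟩, rfl⟩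
  have hT0 : T ≠ 0 := by rintro rfl; simp at hT
  have hGe : G = gaussianPDFReal u T := by
    rw [gaussianPDFReal_def]; exact funext hG
  have hcont : Continuous G := by rw [show G = _ from funext hG]; fun_prop
  have hL : MemLp id 2 (gaussianReal u T) := by exact_mod_cast memLp_id_gaussianReal (μ := u) (v := T) 2
  have hsq : Integrable (fun v : ℝ => v ^ 2) (gaussianReal u T) := hL.integrable_sq
  have h1i : Integrable (fun v : ℝ => 1 + v ^ 2) (gaussianReal u T) := (integrable_const 1).add hsq
  have hsm : ∀ g : ℝ → ℝ, ∫ v, g v ∂gaussianReal u T = ∫ v, g v * G v := by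
    intro g
    rw [integral_gaussianReal_eq_integral_smul hT0, hGe]
    simp_rw [smul_eq_mul, mul_comm]
  refine ⟨fun v => by rw [hGe]; exact gaussianPDFReal_nonneg _ _ _, hcont, ?_, ?_, ?_⟩
  · rw [gaussianReal_of_var_ne_zero _ hT0, integrable_withDensity_iff_integrable_smul'
      (measurable_gaussianPDF _ _) (Eventually.of_forall fun v => by simp [gaussianPDF])] at h1i
    refine h1i.congr (Eventually.of_forall fun v => ?_)
    simp only [smul_eq_mul, gaussianPDF]
    rw [ENNReal.toReal_ofReal (gaussianPDFReal_nonneg _ _ _), hGe, mul_comm]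
  · rw [← hsm, integral_add (integrable_const 1) hsq]
    have := variance_eq_sub hL
    rw [variance_id_gaussianReal] at this
    simp only [Pi.pow_apply, id_eq, integral_id_gaussianReal] at this
    simp
    linarith
  · rw [← hsm, integral_id_gaussianReal]

theorem slice {ℏ τ : ℝ} (hℏ : 0 < ℏ) (hτ : 0 < τ) (V : SchwartzMap ℝ ℝ) {φ : ℝ → ℝ}
    (hc : Continuous φ) (h2 : Integrable fun w => (1 + w ^ 2) * φ w) (x : ℝ)
    {ρ u T : ℝ} (hρ : ρ = ∫ v, φ v) (hρpos : 0 < ρ) (hu : ρ * u = ∫ v, v * φ v)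
    (hT : ρ * T = ∫ v, (v - u) ^ 2 * φ v) (hTpos : 0 < T) (E : ℝ → ℝ)
    (hE : ∀ v, E v = ρ * (Real.sqrt (2 * Real.pi * T))⁻¹ * Real.exp (-(v - u) ^ 2 / (2 * T)))
    (Fx : ℝ → ℝ) (hF : ∀ v, (Fx v : ℂ) + wignerTheta ℏ (⇑V) (fun w => ((φ w : ℝ) : ℂ)) x v =
      (((E v - φ v) / τ : ℝ) : ℂ)) :
    (∫⁻ v, w1 v * ‖Fx v‖ₑ ≤ (2 * ENNReal.ofReal (1 / τ) +
      2 * ENNReal.ofReal (∫ p, (1 + p ^ 2) * AA ℏ V p)) * ∫⁻ v, w1 v * ‖φ v‖ₑ) ∧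
    ∫ v, v * Fx v = -(ρ * deriv V x) := by
  obtain ⟨g0, gc, gi, g2, g1⟩ := gauss_moments u hTpos
    (fun v => (Real.sqrt (2 * Real.pi * T))⁻¹ * Real.exp (-(v - u) ^ 2 / (2 * T))) (fun v => rfl)
  set G := fun v => (Real.sqrt (2 * Real.pi * T))⁻¹ * Real.exp (-(v - u) ^ 2 / (2 * T)) with hG
  have hEG : E = fun v => ρ * G v := by
    ext v; rw [hE, hG, mul_assoc]
  have hφ : Integrable φ := by
    simpa using int_low hc h2 (g := fun _ => 1) continuous_const (K := 1)
      (fun w => by simp; positivity)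
  have hφ1 : Integrable fun w => w * φ w :=
    int_low hc h2 (g := fun w => w) continuous_id (K := 1) abs_le_wt
  have hφ2 : Integrable fun w => w ^ 2 * φ w :=
    int_low hc h2 (g := fun w => w ^ 2) (by fun_prop) (K := 1)
      (fun w => by rw [abs_of_nonneg (sq_nonneg w)]; linarith)
  have hEi : Integrable fun v => (1 + v ^ 2) * E v := by
    refine (gi.const_mul ρ).congr (Eventually.of_forall fun v => ?_)
    simp only [hEG]; ring
  have hEc : Continuous E := by rw [hEG]; fun_prop
  have hE1 : Integrable fun v => v * E v :=
    int_low hEc hEi (g := fun w => w) continuous_id (K := 1) abs_le_wt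
  have hE0 : ∀ v, 0 ≤ E v := fun v => by rw [hEG]; exact mul_nonneg hρpos.le (g0 v)
  have mE2 : ∫ v, (1 + v ^ 2) * E v = ∫ v, (1 + v ^ 2) * φ v := by
    have a1 : ∫ v, (1 + v ^ 2) * E v = ρ * (1 + u ^ 2 + T) := by
      rw [← g2, ← integral_const_mul]; congr 1; ext v; simp only [hEG]; ring
    have a2 : ∫ v, (v - u) ^ 2 * φ v = (∫ v, v ^ 2 * φ v) - 2 * u * (∫ v, v * φ v) + u ^ 2 * ∫ v, φ v := by
      have b1 : Integrable fun v => v ^ 2 * φ v - 2 * u * (v * φ v) := hφ2.sub (hφ1.const_mul _)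
      rw [← integral_const_mul, ← integral_const_mul, ← integral_sub hφ2 (hφ1.const_mul _),
        ← integral_add b1 (hφ.const_mul _)]
      congr 1; ext v; ring
    have a3 : ∫ v, (1 + v ^ 2) * φ v = (∫ v, φ v) + ∫ v, v ^ 2 * φ v := by
      rw [← integral_add hφ hφ2]; congr 1; ext v; ring
    rw [a2, ← hu, ← hρ] at hT
    rw [a1, a3, ← hρ]
    linear_combination hT
  have mE1 : ∫ v, v * E v = ∫ v, v * φ v := by
    rw [← hu, ← g1, ← integral_const_mul]; congr 1; ext v; simp only [hEG]; ring
  have hm := measurable_w1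
  have hcm := hc.measurable
  have hEm := hEc.measurable
  have hw : ∀ (g : ℝ → ℝ) v, w1 v * ‖g v‖ₑ = ‖(1 + v ^ 2) * g v‖ₑ := by
    intro g v
    rw [enorm_mul, w1, Real.enorm_of_nonneg (show (0 : ℝ) ≤ 1 + v ^ 2 by positivity)]
  have lE : ∫⁻ v, w1 v * ‖E v‖ₑ ≤ ∫⁻ v, w1 v * ‖φ v‖ₑ := by
    calc ∫⁻ v, w1 v * ‖E v‖ₑ = ENNReal.ofReal (∫ v, (1 + v ^ 2) * E v) := by
          rw [ofReal_integral_eq_lintegral_ofReal hEi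
            (Eventually.of_forall fun v => mul_nonneg (by positivity) (hE0 v))]
          congr 1; ext v
          rw [hw, Real.enorm_of_nonneg (mul_nonneg (by positivity) (hE0 v))]
      _ = ENNReal.ofReal (∫ v, (1 + v ^ 2) * φ v) := by rw [mE2]
      _ ≤ ‖∫ v, (1 + v ^ 2) * φ v‖ₑ := by
          rw [← ofReal_norm]; exact ENNReal.ofReal_le_ofReal (le_abs_self _)
      _ ≤ ∫⁻ v, ‖(1 + v ^ 2) * φ v‖ₑ := enorm_integral_le_lintegral_enorm _
      _ = _ := by simp_rw [hw]
  have hF' : ∀ v, (Fx v : ℂ) = (((E v - φ v) / τ : ℝ) : ℂ) -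
      wignerTheta ℏ (⇑V) (fun w => ((φ w : ℝ) : ℂ)) x v := fun v => eq_sub_of_add_eq (hF v)
  constructor
  · have pt : ∀ v, w1 v * ‖Fx v‖ₑ ≤ (ENNReal.ofReal (1 / τ) * (w1 v * ‖E v‖ₑ) +
        ENNReal.ofReal (1 / τ) * (w1 v * ‖φ v‖ₑ)) +
        w1 v * ‖wignerTheta ℏ (⇑V) (fun w => ((φ w : ℝ) : ℂ)) x v‖ₑ := by
      intro v
      have : ‖Fx v‖ₑ ≤ (ENNReal.ofReal (1 / τ) * ‖E v‖ₑ + ENNReal.ofReal (1 / τ) * ‖φ v‖ₑ) +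
          ‖wignerTheta ℏ (⇑V) (fun w => ((φ w : ℝ) : ℂ)) x v‖ₑ := by
        have e : ‖Fx v‖ₑ = ‖(Fx v : ℂ)‖ₑ := by
          rw [← ofReal_norm, ← ofReal_norm, Complex.norm_real]
        rw [e, hF']
        refine (enorm_sub_le).trans ?_
        gcongr
        have e : ‖(((E v - φ v) / τ : ℝ) : ℂ)‖ₑ = ‖1 / τ * (E v - φ v)‖ₑ := by
          rw [← ofReal_norm, ← ofReal_norm, Complex.norm_real]; congr 2; ring
        rw [e, enorm_mul, ← mul_add, Real.enorm_of_nonneg (by positivity)]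
        gcongr
        exact enorm_sub_le
      calc _ ≤ w1 v * _ := mul_le_mul_right this _
        _ = _ := by ring
    refine (lintegral_mono pt).trans ?_
    rw [lintegral_add_left (by fun_prop), lintegral_add_left (by fun_prop),
      lintegral_const_mul _ (by fun_prop), lintegral_const_mul _ (by fun_prop)]
    calc _ ≤ (ENNReal.ofReal (1 / τ) * (∫⁻ v, w1 v * ‖φ v‖ₑ) +
          ENNReal.ofReal (1 / τ) * (∫⁻ v, w1 v * ‖φ v‖ₑ)) +
          2 * ENNReal.ofReal (∫ p, (1 + p ^ 2) * AA ℏ V p) * ∫⁻ w, w1 w * ‖φ w‖ₑ := by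
          gcongr
          exact theta_lint hℏ V hc h2 x
      _ = _ := by ring
  · obtain ⟨ti, tm⟩ := theta_mom hℏ V hc h2 x
    have hd : Integrable fun v => 1 / τ * (v * E v - v * φ v) := (hE1.sub hφ1).const_mul _
    have hdC : Integrable fun v => ((1 / τ * (v * E v - v * φ v) : ℝ) : ℂ) := hd.ofReal
    have : ((∫ v, v * Fx v : ℝ) : ℂ) = ((-(ρ * deriv V x) : ℝ) : ℂ) := by
      rw [← integral_complex_ofReal]
      have e : ∀ v : ℝ, ((v * Fx v : ℝ) : ℂ) = ((1 / τ * (v * E v - v * φ v) : ℝ) : ℂ) -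
          (v : ℂ) * wignerTheta ℏ (⇑V) (fun w => ((φ w : ℝ) : ℂ)) x v := by
        intro v
        rw [Complex.ofReal_mul, hF']
        push_cast
        ring
      simp_rw [e]
      rw [integral_sub hdC ti, tm, integral_complex_ofReal, integral_const_mul,
        integral_sub hE1 hφ1, mE1, ← hρ]
      push_cast
      ring
    exact_mod_cast this

end WB

namespace WB
open Set Filter Topology
open scoped ENNReal NNReal

noncomputable def gx (g : SchwartzMap (ℝ × ℝ) ℝ) : SchwartzMap (ℝ × ℝ) ℝ :=
  SchwartzMap.evalCLM ℝ (ℝ × ℝ) ℝ ((1, 0) : ℝ × ℝ) (SchwartzMap.fderivCLM ℝ (ℝ × ℝ) ℝ g)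

theorem gx_deriv (g : SchwartzMap (ℝ × ℝ) ℝ) (x v : ℝ) :
    HasDerivAt (fun y => g (y, v)) (gx g (x, v)) x := by
  have h1 : HasFDerivAt g (fderiv ℝ g (x, v)) (x, v) := g.differentiableAt.hasFDerivAt
  have h2 : HasDerivAt (fun y : ℝ => (y, v)) ((1 : ℝ), (0 : ℝ)) x :=
    (hasDerivAt_id x).prodMk (hasDerivAt_const x v)
  exact h1.comp_hasDerivAt x h2

theorem schwartz_bdd {E : Type*} [NormedAddCommGroup E] [NormedSpace ℝ E] (g : SchwartzMap E ℝ) :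
    ∃ K, 0 < K ∧ ∀ z, |g z| ≤ K := by
  obtain ⟨K, hK, h⟩ := g.decay 0 0
  exact ⟨K, hK, fun z => by simpa using h z⟩

theorem schwartz_s2 (g : SchwartzMap (ℝ × ℝ) ℝ) : ∃ N : ℕ, ∀ y v h k : ℝ,
    |k * (g (y + h, v) - g (y, v)) - h * (g (y + k, v) - g (y, v))|
      ≤ N * (|h| * |k| * (|h| + |k|)) := by
  obtain ⟨K, hK, hb⟩ := schwartz_bdd (gx (gx g))
  obtain ⟨N, hN⟩ := exists_nat_ge K
  have lip : ∀ v a b, |gx g (b, v) - gx g (a, v)| ≤ K * |b - a| := by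
    intro v a b
    exact convex_univ.norm_image_sub_le_of_norm_hasDerivWithin_le
      (f := fun y => gx g (y, v)) (f' := fun y => gx (gx g) (y, v))
      (fun y _ => (gx_deriv (gx g) y v).hasDerivWithinAt) (fun y _ => hb _) (mem_univ a) (mem_univ b)
  have tay : ∀ v y h, |g (y + h, v) - g (y, v) - h * gx g (y, v)| ≤ K * |h| * |h| := by
    intro v y h
    have := (convex_uIcc y (y + h)).norm_image_sub_le_of_norm_hasDerivWithin_le
      (f := fun s => g (s, v) - s * gx g (y, v)) (f' := fun s => gx g (s, v) - gx g (y, v))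
      (C := K * |h|) (x := y) (y := y + h)
      (fun s _ => by
        have := (gx_deriv g s v).sub ((hasDerivAt_id s).mul_const (gx g (y, v)))
        simp only [one_mul] at this
        exact this.hasDerivWithinAt)
      (fun s hs => by
        rw [Real.norm_eq_abs]
        refine (lip v y s).trans ?_
        refine mul_le_mul_of_nonneg_left ?_ hK.le
        have := abs_sub_left_of_mem_uIcc hs
        simpa using this) left_mem_uIcc right_mem_uIcc
    rw [Real.norm_eq_abs, Real.norm_eq_abs, add_sub_cancel_left] at this
    refine le_trans (le_of_eq ?_) this
    congr 1
    ring
  refine ⟨N, fun y v h k => ?_⟩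
  have e : k * (g (y + h, v) - g (y, v)) - h * (g (y + k, v) - g (y, v)) =
      k * (g (y + h, v) - g (y, v) - h * gx g (y, v)) -
        h * (g (y + k, v) - g (y, v) - k * gx g (y, v)) := by ring
  rw [e]
  calc _ ≤ |k| * (K * |h| * |h|) + |h| * (K * |k| * |k|) := by
        refine (abs_sub _ _).trans ?_
        rw [abs_mul, abs_mul]
        gcongr
        · exact tay v y h
        · exact tay v y k
    _ = K * (|h| * |k| * (|h| + |k|)) := by ring
    _ ≤ _ := by gcongr

theorem schwartz_slice (g : SchwartzMap (ℝ × ℝ) ℝ) (x : ℝ) :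
    Integrable fun w => (1 + w ^ 2) * g (x, w) := by
  obtain ⟨K, hK, hb⟩ := schwartz_bdd g
  obtain ⟨K', hK', hb'⟩ := g.decay 4 0
  refine (integrable_inv_one_add_sq.const_mul (2 * (K + K'))).mono' ?_
    (Eventually.of_forall fun w => ?_)
  · have := g.continuous
    exact Continuous.aestronglyMeasurable (by fun_prop)
  · have h1 := hb (x, w)
    have h2 : |w| ^ 4 * |g (x, w)| ≤ K' := by
      refine le_trans ?_ (hb' (x, w))
      rw [norm_iteratedFDeriv_zero, Real.norm_eq_abs]
      gcongr
      exact norm_snd_le (x, w)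
    rw [norm_mul, Real.norm_of_nonneg (show 0 ≤ 1 + w ^ 2 by positivity), Real.norm_eq_abs,
      ← div_eq_mul_inv, le_div_iff₀ (by positivity)]
    have h3 : |w| ^ 4 = w ^ 4 := by rw [← abs_pow, abs_of_nonneg (by positivity)]
    rw [h3] at h2
    nlinarith [abs_nonneg (g (x, w)), mul_nonneg (sq_nonneg (1 - w ^ 2)) (abs_nonneg (g (x, w)))]

theorem schwartz_nrm (g : SchwartzMap (ℝ × ℝ) ℝ) : nrm (fun z => g (z.2, z.1)) < ⊤ := by
  set gs : SchwartzMap (ℝ × ℝ) ℝ :=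
    SchwartzMap.compCLMOfContinuousLinearEquiv ℝ (ContinuousLinearEquiv.prodComm ℝ ℝ ℝ) g
  have h0 := gs.integrable_pow_mul volume 0
  have h2 := gs.integrable_pow_mul volume 2
  refine lt_of_le_of_lt ?_ (h0.add h2).2
  refine lintegral_mono fun z => ?_
  have e : g (z.2, z.1) = gs z := rfl
  beta_reduce
  rw [e, wt, ← ofReal_norm, ← ENNReal.ofReal_mul (by positivity), ← ofReal_norm]
  apply ENNReal.ofReal_le_ofReal
  refine le_trans ?_ (le_abs_self _)
  simp only [Pi.add_apply, pow_zero, one_mul, add_mul]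
  have := norm_fst_le z
  have h5 : z.1 ^ 2 ≤ ‖z‖ ^ 2 := by
    rw [← sq_abs]
    exact pow_le_pow_left₀ (abs_nonneg _) this 2
  exact add_le_add le_rfl (mul_le_mul_of_nonneg_right h5 (norm_nonneg _))

theorem core_of {ℏ τ : ℝ} (hℏ : 0 < ℏ) (hτ : 0 < τ)
    (V : SchwartzMap ℝ ℝ)
    (f ft : ℝ → ℝ → ℝ → ℝ)
    (hfS : ∀ t : ℝ, ∃ g : SchwartzMap (ℝ × ℝ) ℝ, ∀ x v : ℝ, f t x v = g (x, v))
    (hftS : ∀ t : ℝ, ∃ g : SchwartzMap (ℝ × ℝ) ℝ, ∀ x v : ℝ, ft t x v = g (x, v))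
    (hft : ∀ t x v : ℝ, HasDerivAt (fun s => f s x v) (ft t x v) t)
    (hftc : ∀ x v : ℝ, Continuous fun t => ft t x v)
    (ρ u T : ℝ → ℝ → ℝ)
    (hρ : ∀ t x : ℝ, ρ t x = ∫ v : ℝ, f t x v)
    (hρpos : ∀ t x : ℝ, 0 < ρ t x)
    (hu : ∀ t x : ℝ, ρ t x * u t x = ∫ v : ℝ, v * f t x v)
    (hT : ∀ t x : ℝ, ρ t x * T t x = ∫ v : ℝ, (v - u t x) ^ 2 * f t x v)
    (hTpos : ∀ t x : ℝ, 0 < T t x)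
    (feq : ℝ → ℝ → ℝ → ℝ)
    (hfeq : ∀ t x v : ℝ, feq t x v =
      ρ t x * (Real.sqrt (2 * Real.pi * T t x))⁻¹ *
        Real.exp (-(v - u t x) ^ 2 / (2 * T t x)))
    (hPDE : ∀ t x v : ℝ,
      ((ft t x v : ℝ) : ℂ) + (v : ℂ) * ((deriv (fun y => f t y v) x : ℝ) : ℂ) +
          wignerTheta ℏ (⇑V) (fun w => ((f t x w : ℝ) : ℂ)) x v =
        (((feq t x v - f t x v) / τ : ℝ) : ℂ)) :
    ∃ (F : ℝ → ℝ → ℝ → ℝ) (C : ℝ≥0), Core f F C ∧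
      ∀ t x, ∫ v, v * F t x v = -(ρ t x * deriv V x) := by
  set F : ℝ → ℝ → ℝ → ℝ := fun t x v => ft t x v + v * deriv (fun y => f t y v) x with hF
  have hsl : ∀ t x, Continuous (f t x) ∧ Integrable fun w => (1 + w ^ 2) * f t x w := by
    intro t x
    obtain ⟨g, hg⟩ := hfS t
    have e : f t x = fun w => g (x, w) := funext fun w => hg x w
    rw [e]
    have := g.continuous
    exact ⟨by fun_prop, schwartz_slice g x⟩
  have hS : ∀ t x, _ := fun t x => slice hℏ hτ V (hsl t x).1 (hsl t x).2 x (hρ t x) (hρpos t x)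
    (hu t x) (hT t x) (hTpos t x) (feq t x) (hfeq t x) (F t x)
    (fun v => by rw [← hPDE t x v]; simp only [hF]; push_cast; ring)
  have hdx : ∀ t x v, HasDerivAt (fun y => f t y v) (deriv (fun y => f t y v) x) x := by
    intro t x v
    obtain ⟨g, hg⟩ := hfS t
    have e : (fun y => f t y v) = fun y => g (y, v) := funext fun y => hg y v
    rw [e]
    exact (gx_deriv g x v).differentiableAt.hasDerivAt
  have hct : ∀ x v, Continuous fun t => f t x v := fun x v =>
    continuous_iff_continuousAt.2 fun t => (hft t x v).continuousAt
  have hcz : ∀ t, Continuous (fz f t) := by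
    intro t
    obtain ⟨g, hg⟩ := hfS t
    have e : fz f t = fun z => g (z.2, z.1) := funext fun z => hg z.2 z.1
    rw [e]
    have := g.continuous
    fun_prop
  have hczt : ∀ t, Continuous (fz ft t) := by
    intro t
    obtain ⟨g, hg⟩ := hftS t
    have e : fz ft t = fun z => g (z.2, z.1) := funext fun z => hg z.2 z.1
    rw [e]
    have := g.continuous
    fun_prop
  have mf : Measurable fun p : ℝ × (ℝ × ℝ) => fz f p.1 p.2 :=
    measurable_uncurry_of_continuous_of_measurable (u := fz f) (fun z => hct z.2 z.1)
      (fun t => (hcz t).measurable)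
  have mft : Measurable fun p : ℝ × (ℝ × ℝ) => fz ft p.1 p.2 :=
    measurable_uncurry_of_continuous_of_measurable (u := fz ft) (fun z => hftc z.2 z.1)
      (fun t => (hczt t).measurable)
  have mdx : Measurable fun p : ℝ × (ℝ × ℝ) => deriv (fun y => f p.1 y p.2.1) p.2.2 := by
    have hε : Tendsto (fun n : ℕ => 1 / ((n : ℝ) + 1)) atTop (𝓝[≠] 0) := by
      refine tendsto_nhdsWithin_iff.2 ⟨tendsto_one_div_add_atTop_nhds_zero_nat, ?_⟩
      exact Eventually.of_forall fun n => (by positivity : (1 / ((n : ℝ) + 1)) ≠ 0)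
    refine measurable_of_tendsto_metrizable
      (f := fun (n : ℕ) (p : ℝ × (ℝ × ℝ)) => (1 / ((n : ℝ) + 1))⁻¹ •
        (fz f p.1 (p.2.1, p.2.2 + 1 / ((n : ℝ) + 1)) - fz f p.1 p.2)) (fun n => ?_) ?_
    · have : Measurable fun p : ℝ × (ℝ × ℝ) => fz f p.1 (p.2.1, p.2.2 + 1 / ((n : ℝ) + 1)) :=
        mf.comp (f := fun p : ℝ × (ℝ × ℝ) => (p.1, (p.2.1, p.2.2 + 1 / ((n : ℝ) + 1)))) (by fun_prop)
      exact (this.sub mf).const_smul ((1 / ((n : ℝ) + 1))⁻¹)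
    · rw [tendsto_pi_nhds]
      rintro ⟨t, v, x⟩
      exact (hasDerivAt_iff_tendsto_slope_zero.1 (hdx t x v)).comp hε
  have mF : Measurable fun p : ℝ × (ℝ × ℝ) => fz F p.1 p.2 :=
    mft.add ((measurable_fst.comp measurable_snd).mul mdx)
  refine ⟨F, 2 * (1 / τ).toNNReal + 2 * (∫ p, (1 + p ^ 2) * AA ℏ V p).toNNReal,
    ⟨hct, hcz, mF, ?_, ?_, ?_, ?_⟩, fun t x => (hS t x).2⟩
  · intro t
    obtain ⟨g, hg⟩ := hfS t
    have e : fz f t = fun z => g (z.2, z.1) := funext fun z => hg z.2 z.1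
    rw [nn, e]
    exact schwartz_nrm g
  · exact fun t x v => ⟨_, _, hft t x v, hdx t x v, rfl⟩
  · intro t
    obtain ⟨g, hg⟩ := hfS t
    obtain ⟨N, hN⟩ := schwartz_s2 g
    refine ⟨N, fun y v h k => ?_⟩
    simp only [hg]
    exact hN y v h k
  · intro t
    have mFt : Measurable (fz F t) := mF.comp (measurable_prodMk_left (x := t))
    have mfg := (hcz t).measurable
    have mwt := measurable_wt
    have mw1 := measurable_w1
    have e : ∀ φ : ℝ → ℝ → ℝ → ℝ, Measurable (fz φ t) →
        nn φ t = ∫⁻ x, ∫⁻ v, w1 v * ‖φ t x v‖ₑ := by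
      intro φ hφ
      unfold nn nrm
      rw [Measure.volume_eq_prod, lintegral_prod_symm' _ (by fun_prop)]
      rfl
    rw [e F mFt, e f mfg, ← lintegral_const_mul]
    · refine lintegral_mono fun x => (hS t x).1.trans (le_of_eq ?_)
      push_cast
      rfl
    · have : Measurable fun z : ℝ × ℝ => w1 z.1 * ‖fz f t z‖ₑ := by fun_prop
      exact (this.comp measurable_swap).lintegral_prod_right'

end WB

/-- Momentum balance for the 1D Wigner–BGK equation: along a continuously differentiable
curve `t ↦ f(t)` of Schwartz functions of `(x,v)` solving
`∂f/∂t + v ∂f/∂x + Θ[V]f = (f_eq - f)/τ`, one has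
`d/dt ∫∫ v f dx dv = -∫ ρ V' dx`. -/
theorem wignerBGK_momentum_balance (ℏ τ : ℝ) (hℏ : 0 < ℏ) (hτ : 0 < τ)
    (V : SchwartzMap ℝ ℝ)
    (f ft : ℝ → ℝ → ℝ → ℝ)
    (hfS : ∀ t : ℝ, ∃ g : SchwartzMap (ℝ × ℝ) ℝ, ∀ x v : ℝ, f t x v = g (x, v))
    (hftS : ∀ t : ℝ, ∃ g : SchwartzMap (ℝ × ℝ) ℝ, ∀ x v : ℝ, ft t x v = g (x, v))
    (hft : ∀ t x v : ℝ, HasDerivAt (fun s => f s x v) (ft t x v) t)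
    (hftc : ∀ x v : ℝ, Continuous fun t => ft t x v)
    (ρ u T : ℝ → ℝ → ℝ)
    (hρ : ∀ t x : ℝ, ρ t x = ∫ v : ℝ, f t x v)
    (hρpos : ∀ t x : ℝ, 0 < ρ t x)
    (hu : ∀ t x : ℝ, ρ t x * u t x = ∫ v : ℝ, v * f t x v)
    (hT : ∀ t x : ℝ, ρ t x * T t x = ∫ v : ℝ, (v - u t x) ^ 2 * f t x v)
    (hTpos : ∀ t x : ℝ, 0 < T t x)
    (feq : ℝ → ℝ → ℝ → ℝ)
    (hfeq : ∀ t x v : ℝ, feq t x v =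
      ρ t x * (Real.sqrt (2 * Real.pi * T t x))⁻¹ *
        Real.exp (-(v - u t x) ^ 2 / (2 * T t x)))
    (hPDE : ∀ t x v : ℝ,
      ((ft t x v : ℝ) : ℂ) + (v : ℂ) * ((deriv (fun y => f t y v) x : ℝ) : ℂ) +
          wignerTheta ℏ (⇑V) (fun w => ((f t x w : ℝ) : ℂ)) x v =
        (((feq t x v - f t x v) / τ : ℝ) : ℂ)) :
    ∀ t : ℝ, HasDerivAt (fun s => ∫ x : ℝ, ∫ v : ℝ, v * f s x v)
      (-∫ x : ℝ, ρ t x * deriv (⇑V) x) t := by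
  obtain ⟨F, C, h, hm⟩ := WB.core_of hℏ hτ V f ft hfS hftS hft hftc ρ u T hρ hρpos hu hT hTpos feq
    hfeq hPDE
  have hVd : ⇑(SchwartzMap.derivCLM ℝ ℝ V) = deriv (⇑V) := by
    ext y; rw [SchwartzMap.derivCLM_apply]
  have hW : Continuous (deriv (⇑V)) := by
    rw [← hVd]; exact SchwartzMap.continuous _
  obtain ⟨K, hK0, hK⟩ := WB.schwartz_bdd (SchwartzMap.derivCLM ℝ ℝ V)
  rw [hVd] at hK
  have mF : ∀ t, Measurable (WB.fz F t) := fun t => h.meas_F.comp (measurable_prodMk_left (x := t))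
  have iF : ∀ t, Integrable fun z : ℝ × ℝ => z.1 * WB.fz F t z := fun t =>
    WB.integrable_of_nrm (mF t) measurable_fst
      (lt_of_le_of_lt (h.bd t) (ENNReal.mul_lt_top (by simp) (h.fin t))) WB.enorm_fst_le_wt
  have if1 : ∀ t, Integrable fun z : ℝ × ℝ => z.1 * WB.fz f t z := fun t =>
    WB.integrable_of_nrm (h.cont_z t).measurable measurable_fst (h.fin t) WB.enorm_fst_le_wt
  have if0 : ∀ t, Integrable fun z : ℝ × ℝ => WB.fz f t z := fun t => by
    have := WB.integrable_of_nrm (ψ := fun _ => 1) (h.cont_z t).measurable measurable_const (h.fin t)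
      (fun z => by simpa using WB.one_le_wt z)
    simpa using this
  have iW : ∀ t, Integrable fun z : ℝ × ℝ => deriv V z.2 * WB.fz f t z := fun t => by
    refine (if0 t).bdd_mul (c := K) ?_ (Filter.Eventually.of_forall fun z => hK _)
    exact Continuous.aestronglyMeasurable (by fun_prop)
  have e1 : ∀ s, ∫ x : ℝ, ∫ v : ℝ, v * f s x v = ∫ z : ℝ × ℝ, z.1 * WB.fz f s z := fun s =>
    (integral_prod_symm (μ := volume) (ν := volume) _ (if1 s)).symm
  have e2 : ∀ s, ∫ x : ℝ, ρ s x * deriv (⇑V) x = ∫ z : ℝ × ℝ, deriv V z.2 * WB.fz f s z := by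
    intro s
    refine Eq.trans ?_ (integral_prod_symm (μ := volume) (ν := volume) _ (iW s)).symm
    congr 1
    ext x
    simp only [WB.fz]
    rw [integral_const_mul, hρ, mul_comm]
  have e3 : ∀ s, ∫ z : ℝ × ℝ, z.1 * WB.fz F s z = -∫ z : ℝ × ℝ, deriv V z.2 * WB.fz f s z := by
    intro s
    rw [← e2, ← integral_neg]
    refine (integral_prod_symm (μ := volume) (ν := volume) _ (iF s)).trans ?_
    congr 1
    ext x
    exact hm s x
  intro t
  simp_rw [e1, e2]
  exact h.momentum hW hK e3 t
end
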